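/- arXiv:0812.4266 — 9 statements merged into one kernel-verified Lean document; each statement's English description precedes it below -/
import Mathlib

section
/- For every n ≥ 2 and every j ∈ {0,…,n}, the restriction of the SSA map T to the set {x ∈ B(j) : x_1 > 0} is injective. -/
/-- Entry access with junk value `0` outside the index range: `ent x m = x_{m+1}`
(0-based coordinate `m`) for `m < n`, and `0` otherwise. -/
noncomputable def ent {n : ℕ} (x : Fin n → ℝ) (m : ℕ) : ℝ :=
  if h : m < n then x ⟨m, h⟩ else 0

/-- `B^n = {x ∈ ℝ^n : 1 ≥ x₁ ≥ x₂ ≥ ⋯ ≥ x_n ≥ 0}` (note that the stated antitonicity of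
the `0`-extended sequence `ent x` encodes both the ordering and `x_n ≥ 0`). -/
def Bset (n : ℕ) : Set (Fin n → ℝ) :=
  {x | ent x 0 ≤ 1 ∧ ∀ i j : ℕ, i ≤ j → ent x j ≤ ent x i}

/-- The index `j(x) = #{l ∈ {1,…,n} : x_l > 1 − x_n}` of the SSA. -/
noncomputable def ssaJ {n : ℕ} (x : Fin n → ℝ) : ℕ :=
  (Finset.univ.filter fun l : Fin n => 1 - ent x (n - 1) < x l).card

/-- The subtractive Selmer algorithm (SSA) map `T` on `B^n`:
if `j(x) = 0` then `Tx = (x₁/(1−x_n), …, x_n/(1−x_n))`, and if `1 ≤ j(x) ≤ n` then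
`Tx = (x₂/x₁, …, x_j/x₁, (1−x_n)/x₁, x_{j+1}/x₁, …, x_n/x₁)` with `(1−x_n)/x₁` in
position `j` (1-based positions; coordinate `i : Fin n` is position `i+1`). -/
noncomputable def ssaT {n : ℕ} (x : Fin n → ℝ) : Fin n → ℝ :=
  if ssaJ x = 0 then fun i => x i / (1 - ent x (n - 1))
  else fun i =>
    if (i : ℕ) + 1 < ssaJ x then ent x ((i : ℕ) + 1) / ent x 0
    else if (i : ℕ) + 1 = ssaJ x then (1 - ent x (n - 1)) / ent x 0
    else x i / ent x 0

/-- **Injectivity of the SSA on each cell.** For every `n ≥ 2` and every `j ∈ {0,…,n}`,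
the restriction of the SSA map `T` to `{x ∈ B(j) : x₁ > 0}` is injective,
where `B(j) = {x ∈ B^n : j(x) = j}`. -/
theorem ssa_injOn_cells (n : ℕ) (hn : 2 ≤ n) (j : ℕ) (hj : j ≤ n) :
    Set.InjOn ssaT {x : Fin n → ℝ | x ∈ Bset n ∧ ssaJ x = j ∧ 0 < ent x 0} := by
  rintro x ⟨hxB, hxj, hx0⟩ z ⟨hzB, hzj, hz0⟩ h
  have entv : ∀ (w : Fin n → ℝ) (m : ℕ) (hm : m < n), ent w m = w ⟨m, hm⟩ := by
    intro w m hm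
    simp [ent, hm]
  suffices H : ∀ m, m < n → ent x m = ent z m by
    funext i
    have := H i i.2
    rwa [entv x i i.2, entv z i i.2] at this
  rcases Nat.eq_zero_or_pos j with h0 | hpos
  · subst h0
    have pos : ∀ w : Fin n → ℝ, ssaJ w = 0 → 0 < ent w 0 → 0 < 1 - ent w (n - 1) := by
      intro w hw hw0
      rw [ssaJ, Finset.card_eq_zero, Finset.filter_eq_empty_iff] at hw
      have := hw (Finset.mem_univ (⟨0, by omega⟩ : Fin n))
      rw [← entv w 0 (by omega)] at this
      linarith
    have px := pos x hxj hx0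
    have pz := pos z hzj hz0
    have key : ∀ m, m < n →
        ent x m / (1 - ent x (n - 1)) = ent z m / (1 - ent z (n - 1)) := by
      intro m hm
      have := congrFun h ⟨m, hm⟩
      simp only [ssaT, hxj, hzj, if_true] at this
      rwa [entv x m hm, entv z m hm]
    have e : ent x (n - 1) = ent z (n - 1) := by
      have := key (n - 1) (by omega)
      rw [div_eq_div_iff px.ne' pz.ne'] at this
      linarith
    intro m hm
    have := key m hm
    rw [e] at this
    exact (div_left_inj' pz.ne').mp this
  · have hne : j ≠ 0 := by omega
    have key : ∀ m, 1 ≤ m → m < n → ent x m / ent x 0 = ent z m / ent z 0 := by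
      intro m h1 hm
      by_cases hmj : m < j
      · have := congrFun h ⟨m - 1, by omega⟩
        have e : m - 1 + 1 = m := by omega
        simpa only [ssaT, hxj, hzj, hne, if_false, e, hmj, if_true] using this
      · have := congrFun h ⟨m, hm⟩
        have a1 : ¬ (m + 1 < j) := by omega
        have a2 : ¬ (m + 1 = j) := by omega
        simp only [ssaT, hxj, hzj, hne, if_false, a1, a2] at this
        rwa [entv x m hm, entv z m hm]
    have key2 : (1 - ent x (n - 1)) / ent x 0 = (1 - ent z (n - 1)) / ent z 0 := by
      have := congrFun h ⟨j - 1, by omega⟩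
      have e : j - 1 + 1 = j := by omega
      simpa only [ssaT, hxj, hzj, hne, if_false, e, lt_irrefl, if_true] using this
    have e0 : ent x 0 = ent z 0 := by
      have k := key (n - 1) (by omega) (by omega)
      rw [sub_div, sub_div, k] at key2
      have : 1 / ent x 0 = 1 / ent z 0 := by linarith
      simpa using this
    intro m hm
    rcases Nat.eq_zero_or_pos m with rfl | hm1
    · exact e0
    · have := key m hm1 hm
      rw [e0] at this
      exact (div_left_inj' hz0.ne').mp this
end

section
/- Let n ≥ 2 and D := {x ∈ B^n : x_{n−1} + x_n ≥ 1}. Then the SSA map T maps D onto D: T '' D = D. -/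
theorem ent_of_lt {n : ℕ} (x : Fin n → ℝ) (m : ℕ) (h : m < n) : ent x m = x ⟨m, h⟩ := by
  simp [ent, h]

theorem ent_of_ge {n : ℕ} (x : Fin n → ℝ) (m : ℕ) (h : n ≤ m) : ent x m = 0 := by
  simp [ent, h]

theorem lt_ssaJ {n : ℕ} (x : Fin n → ℝ) (hx : ∀ i j : ℕ, i ≤ j → ent x j ≤ ent x i)
    (k : ℕ) (hk : k < n) : 1 - ent x (n - 1) < ent x k ↔ k < ssaJ x := by
  unfold ssaJ
  constructor
  · intro h
    have hs : Finset.Iic (⟨k, hk⟩ : Fin n) ⊆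
        Finset.univ.filter fun l : Fin n => 1 - ent x (n - 1) < x l := by
      intro l hl
      have hl' : (l : ℕ) ≤ k := by simpa [Fin.le_def] using hl
      have h1 := hx l k hl'
      rw [ent_of_lt x l l.2] at h1
      simp only [Finset.mem_filter, Finset.mem_univ, true_and]
      exact lt_of_lt_of_le h h1
    have := Finset.card_le_card hs
    rw [Fin.card_Iic] at this
    simp only at this
    omega
  · intro h
    by_contra hc
    have hs : (Finset.univ.filter fun l : Fin n => 1 - ent x (n - 1) < x l) ⊆
        Finset.Iio (⟨k, hk⟩ : Fin n) := by
      intro l hl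
      simp only [Finset.mem_filter, Finset.mem_univ, true_and] at hl
      rw [Finset.mem_Iio, Fin.lt_def]
      by_contra hlk
      have h1 := hx k l (by simpa using hlk)
      rw [ent_of_lt x l l.2] at h1
      exact hc (lt_of_lt_of_le hl h1)
    have := Finset.card_le_card hs
    rw [Fin.card_Iio] at this
    simp only at this
    omega

theorem ssaJ_le {n : ℕ} (x : Fin n → ℝ) : ssaJ x ≤ n := by
  unfold ssaJ
  exact (Finset.card_le_univ _).trans (by simp)

/-- On `D` with `x_n ≤ 1/2` the map is `(x₂, …, x_{n-1}, 1 - x_n, x_n)/x₁`. -/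
theorem ssaT_low {n : ℕ} (hn : 2 ≤ n) (x : Fin n → ℝ)
    (hx : ∀ i j : ℕ, i ≤ j → ent x j ≤ ent x i)
    (hD : 1 ≤ ent x (n - 2) + ent x (n - 1)) (hl : ent x (n - 1) ≤ 1 - ent x (n - 1))
    (i : ℕ) (hi : i < n) :
    ent (ssaT x) i = (if i + 2 < n then ent x (i + 1) else if i + 2 = n then 1 - ent x (n - 1)
      else ent x (n - 1)) / ent x 0 := by
  have hJ := lt_ssaJ x hx
  have hJn : ssaJ x ≤ n - 1 := by
    have := hJ (n - 1) (by omega)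
    by_contra hc
    have := this.2 (by omega)
    linarith
  have heq : ∀ k, ssaJ x ≤ k → k + 2 ≤ n → ent x k = 1 - ent x (n - 1) := by
    intro k h1 h2
    have h3 := hx k (n - 2) (by omega)
    have h4 : ¬ (1 - ent x (n - 1) < ent x k) := by
      rw [hJ k (by omega)]; omega
    linarith
  rw [ent_of_lt _ i hi]
  unfold ssaT
  by_cases h0 : ssaJ x = 0
  · rw [if_pos h0]
    rw [← ent_of_lt x i hi, heq 0 (by omega) (by omega)]
    congr 1
    split_ifs with h1 h2
    · rw [heq i (by omega) (by omega), heq (i + 1) (by omega) (by omega)]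
    · rw [heq i (by omega) (by omega)]
    · congr 1; omega
  · rw [if_neg h0]
    simp only
    rw [← ent_of_lt x i hi]
    by_cases h1 : i + 1 < ssaJ x
    · rw [if_pos h1, if_pos (by omega)]
    · rw [if_neg h1]
      by_cases h2 : i + 1 = ssaJ x
      · rw [if_pos h2]
        congr 1
        split_ifs with h3 h4
        · rw [heq (i + 1) (by omega) (by omega)]
        · rfl
        · omega
      · rw [if_neg h2]
        congr 1
        split_ifs with h3 h4
        · rw [heq i (by omega) (by omega), heq (i + 1) (by omega) (by omega)]
        · rw [heq i (by omega) (by omega)]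
        · congr 1; omega

/-- If `x_n > 1/2` the map is `(x₂, …, x_n, 1 - x_n)/x₁`. -/
theorem ssaT_high {n : ℕ} (hn : 2 ≤ n) (x : Fin n → ℝ)
    (hx : ∀ i j : ℕ, i ≤ j → ent x j ≤ ent x i)
    (hl : 1 - ent x (n - 1) < ent x (n - 1))
    (i : ℕ) (hi : i < n) :
    ent (ssaT x) i = (if i + 1 < n then ent x (i + 1) else 1 - ent x (n - 1)) / ent x 0 := by
  have hJ : ssaJ x = n := by
    have h1 := (lt_ssaJ x hx (n - 1) (by omega)).1 hl
    have h2 := ssaJ_le x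
    omega
  rw [ent_of_lt _ i hi]
  unfold ssaT
  rw [hJ, if_neg (by omega)]
  simp only
  by_cases h1 : i + 1 < n
  · rw [if_pos h1, if_pos h1]
  · rw [if_neg h1, if_neg h1, if_pos (by omega)]

theorem ssaT_mem {n : ℕ} (hn : 2 ≤ n) (x : Fin n → ℝ) (hB : x ∈ Bset n)
    (hD : 1 ≤ ent x (n - 2) + ent x (n - 1)) :
    ssaT x ∈ Bset n ∧ 1 ≤ ent (ssaT x) (n - 2) + ent (ssaT x) (n - 1) := by
  obtain ⟨h1, hx⟩ := hB
  have hn0 : 0 ≤ ent x (n - 1) := by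
    have := hx (n - 1) n (by omega)
    rwa [ent_of_ge x n le_rfl] at this
  have hn1 : ent x (n - 1) ≤ 1 := (hx 0 (n - 1) (by omega)).trans h1
  have ha := hx 0 (n - 2) (by omega)
  have hb := hx 0 (n - 1) (by omega)
  have hc := hx (n - 2) (n - 1) (by omega)
  have hpos : 0 < ent x 0 := by linarith
  rcases le_or_gt (ent x (n - 1)) (1 - ent x (n - 1)) with hl | hl
  · have hT := ssaT_low hn x hx hD hl
    refine ⟨⟨?_, ?_⟩, ?_⟩
    · rw [hT 0 (by omega), div_le_one hpos]
      split_ifs with h2 h3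
      · exact hx _ _ (by omega)
      · linarith
      · linarith
    · refine fun i j hij => antitone_nat_of_succ_le (f := ent (ssaT x)) (fun k => ?_) hij
      by_cases hk : k + 1 < n
      · rw [hT k (by omega), hT (k + 1) hk]
        apply div_le_div_of_nonneg_right _ hpos.le
        split_ifs <;> first
          | omega
          | exact hl
          | exact hx _ _ (by omega)
          | (have := hx (k + 1) (n - 2) (by omega); linarith)
      · rw [ent_of_ge _ (k + 1) (by omega)]
        by_cases hk' : k < n
        · rw [hT k hk']
          apply div_nonneg _ hpos.le
          split_ifs <;> first
            | omega
            | linarith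
        · rw [ent_of_ge _ k (by omega)]
    · rw [hT (n - 2) (by omega), hT (n - 1) (by omega), if_neg (by omega), if_pos (by omega),
        if_neg (by omega), if_neg (by omega), ← add_div, le_div_iff₀ hpos]
      linarith
  · have hT := ssaT_high hn x hx hl
    refine ⟨⟨?_, ?_⟩, ?_⟩
    · rw [hT 0 (by omega), div_le_one hpos, if_pos (by omega)]
      exact hx _ _ (by omega)
    · refine fun i j hij => antitone_nat_of_succ_le (f := ent (ssaT x)) (fun k => ?_) hij
      by_cases hk : k + 1 < n
      · rw [hT k (by omega), hT (k + 1) hk]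
        apply div_le_div_of_nonneg_right _ hpos.le
        rw [if_pos hk]
        split_ifs
        · exact hx _ _ (by omega)
        · have := hx (k + 1) (n - 1) (by omega)
          linarith
      · rw [ent_of_ge _ (k + 1) (by omega)]
        by_cases hk' : k < n
        · rw [hT k hk']
          apply div_nonneg _ hpos.le
          rw [if_neg hk]
          linarith
        · rw [ent_of_ge _ k (by omega)]
    · rw [hT (n - 2) (by omega), hT (n - 1) (by omega), if_pos (by omega),
        if_neg (by omega), ← add_div, le_div_iff₀ hpos, show n - 2 + 1 = n - 1 by omega]
      linarith

theorem ssaT_surj {n : ℕ} (hn : 2 ≤ n) (y : Fin n → ℝ) (hB : y ∈ Bset n)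
    (hD : 1 ≤ ent y (n - 2) + ent y (n - 1)) :
    ∃ x : Fin n → ℝ, (x ∈ Bset n ∧ 1 ≤ ent x (n - 2) + ent x (n - 1)) ∧ ssaT x = y := by
  obtain ⟨h1, hy⟩ := hB
  have hn0 : 0 ≤ ent y (n - 1) := by
    have := hy (n - 1) n (by omega)
    rwa [ent_of_ge y n le_rfl] at this
  have hc := hy (n - 2) (n - 1) (by omega)
  set S : ℝ := ent y (n - 2) + ent y (n - 1) with hS
  have hpos : 0 < S := by linarith
  let x : Fin n → ℝ := fun i =>
    (if (i : ℕ) = 0 then 1 else if (i : ℕ) + 1 = n then ent y (n - 1) else ent y (i - 1)) / S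
  have hxe : ∀ k, k < n → ent x k =
      (if k = 0 then 1 else if k + 1 = n then ent y (n - 1) else ent y (k - 1)) / S := by
    intro k hk
    rw [ent_of_lt x k hk]
  have hx0 : ent x 0 = 1 / S := by rw [hxe 0 (by omega), if_pos rfl]
  have hxn : ent x (n - 1) = ent y (n - 1) / S := by
    rw [hxe (n - 1) (by omega), if_neg (by omega), if_pos (by omega)]
  have hsn : 1 - ent x (n - 1) = ent y (n - 2) / S := by
    rw [hxn, eq_div_iff hpos.ne', sub_mul, div_mul_cancel₀ _ hpos.ne']
    linarith
  have hle1 : ∀ k, ent y k ≤ 1 := fun k => (hy 0 k (by omega)).trans h1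
  have hanti : ∀ i j : ℕ, i ≤ j → ent x j ≤ ent x i := by
    refine fun i j hij => antitone_nat_of_succ_le (f := ent x) (fun k => ?_) hij
    by_cases hk : k + 1 < n
    · rw [hxe k (by omega), hxe (k + 1) hk, if_neg (Nat.succ_ne_zero k)]
      apply div_le_div_of_nonneg_right _ hpos.le
      split_ifs <;> first
        | omega
        | exact hle1 _
        | exact hy _ _ (by omega)
    · rw [ent_of_ge _ (k + 1) (by omega)]
      by_cases hk' : k < n
      · rw [show k = n - 1 by omega, hxn]
        exact div_nonneg hn0 hpos.le
      · rw [ent_of_ge _ k (by omega)]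
  have hxD : 1 ≤ ent x (n - 2) + ent x (n - 1) := by
    have : 1 - ent x (n - 1) ≤ ent x (n - 2) := by
      rw [hsn, hxe (n - 2) (by omega)]
      apply div_le_div_of_nonneg_right _ hpos.le
      split_ifs <;> first
        | omega
        | exact hle1 _
        | exact hy _ _ (by omega)
    linarith
  have hlow : ent x (n - 1) ≤ 1 - ent x (n - 1) := by
    rw [hsn, hxn]
    exact div_le_div_of_nonneg_right hc hpos.le
  refine ⟨x, ⟨⟨?_, hanti⟩, hxD⟩, ?_⟩
  · rw [hx0, div_le_one hpos]
    exact hD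
  · funext i
    have h := ssaT_low hn x hanti hxD hlow i i.2
    rw [ent_of_lt _ _ i.2] at h
    have h2 : y i = ent y i := (ent_of_lt y i i.2).symm
    rw [h2]
    refine Eq.trans h ?_
    rw [hx0, hsn, hxn]
    have hi := i.2
    split_ifs with h3 h4
    · rw [hxe _ (by omega), if_neg (by omega), if_neg (by omega), Nat.add_sub_cancel]
      field_simp
    · rw [show (i : ℕ) = n - 2 by omega]
      field_simp
    · rw [show (i : ℕ) = n - 1 by omega]
      field_simp

/-- **The SSA maps `D` onto `D`.** For `n ≥ 2` and the absorbing set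
`D = {x ∈ B^n : x_{n−1} + x_n ≥ 1}` (0-based coordinates `n−2` and `n−1`),
one has `T '' D = D`. -/
theorem ssa_image_absorbing_set (n : ℕ) (hn : 2 ≤ n) :
    ssaT '' {x : Fin n → ℝ | x ∈ Bset n ∧ 1 ≤ ent x (n - 2) + ent x (n - 1)}
      = {x : Fin n → ℝ | x ∈ Bset n ∧ 1 ≤ ent x (n - 2) + ent x (n - 1)} := by
  apply Set.Subset.antisymm
  · rintro _ ⟨x, ⟨hB, hD⟩, rfl⟩
    exact ssaT_mem hn x hB hD
  · rintro y ⟨hB, hD⟩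
    exact ssaT_surj hn y hB hD
end

section
/- Let n ≥ 2 and D := {x ∈ B^n : x_{n−1} + x_n ≥ 1}. For Lebesgue-almost every x ∈ B^n there exists N = N(x) ∈ ℕ such that T^N x ∈ D. Together with T '' D = D, this says D is an absorbing set for the SSA. -/
theorem ent_nonneg_aux {n : ℕ} {x : Fin n → ℝ} (hx : x ∈ Bset n) (m : ℕ) : 0 ≤ ent x m := by
  have h := hx.2 m (m + n) (by omega)
  have h2 : ent x (m + n) = 0 := by unfold ent; rw [dif_neg (by omega)]
  linarith

theorem lt_ssaJ_iff {n : ℕ} {x : Fin n → ℝ} (hx : x ∈ Bset n) (m : ℕ) (hm : m < n) :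
    m < ssaJ x ↔ 1 - ent x (n - 1) < ent x m := by
  have hent : ∀ l : Fin n, ent x l = x l := by
    intro l; unfold ent; rw [dif_pos l.2]
  constructor
  · intro h
    by_contra hc
    have hsub : (Finset.univ.filter fun l : Fin n => 1 - ent x (n - 1) < x l) ⊆
        Finset.Iio (⟨m, hm⟩ : Fin n) := by
      intro l hl
      rw [Finset.mem_filter] at hl
      rw [Finset.mem_Iio, Fin.lt_def]
      by_contra hlm
      have := hx.2 m l (by simpa using hlm)
      rw [hent] at this
      linarith [hl.2]
    have := Finset.card_le_card hsub
    rw [Fin.card_Iio] at this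
    unfold ssaJ at h
    simp only at this
    omega
  · intro h
    have hsub : Finset.Iic (⟨m, hm⟩ : Fin n) ⊆
        (Finset.univ.filter fun l : Fin n => 1 - ent x (n - 1) < x l) := by
      intro l hl
      rw [Finset.mem_Iic, Fin.le_def] at hl
      rw [Finset.mem_filter]
      have := hx.2 l m hl
      rw [hent] at this
      exact ⟨Finset.mem_univ _, by linarith⟩
    have := Finset.card_le_card hsub
    rw [Fin.card_Iic] at this
    unfold ssaJ
    simp only at this
    omega

theorem sum_insert_aux (e : ℕ → ℝ) (c : ℝ) (j : ℕ) (hj : 1 ≤ j) (m : ℕ) :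
    (m < j → ∑ i ∈ Finset.range m, (if i + 1 < j then e (i + 1) else if i + 1 = j then c else e i)
      + e 0 = ∑ i ∈ Finset.range (m + 1), e i) ∧
    (j ≤ m → ∑ i ∈ Finset.range m, (if i + 1 < j then e (i + 1) else if i + 1 = j then c else e i)
      + e 0 = ∑ i ∈ Finset.range m, e i + c) := by
  induction m with
  | zero => exact ⟨fun _ => by simp, fun h => by omega⟩
  | succ m ih =>
    constructor
    · intro h
      have := ih.1 (by omega)
      rw [Finset.sum_range_succ, Finset.sum_range_succ _ (m + 1), if_pos h]
      linarith
    · intro h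
      rw [Finset.sum_range_succ, if_neg (by omega)]
      rcases Nat.lt_or_ge m j with h1 | h1
      · have := ih.1 h1
        rw [if_pos (by omega)]
        linarith
      · have := ih.2 h1
        rw [if_neg (by omega), Finset.sum_range_succ _ m]
        linarith

/-- Outside `D`, with positive last entry, one step stays in `B`, keeps positivity and lowers
the potential `(1 + ∑ x_i) / x_n` by exactly one. -/
theorem ssa_step {n : ℕ} (hn : 2 ≤ n) {x : Fin n → ℝ} (hx : x ∈ Bset n)
    (hpos : 0 < ent x (n - 1)) (hD : ent x (n - 2) + ent x (n - 1) < 1) :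
    ssaT x ∈ Bset n ∧ 0 < ent (ssaT x) (n - 1) ∧
      (1 + ∑ m ∈ Finset.range n, ent (ssaT x) m) / ent (ssaT x) (n - 1) =
      (1 + ∑ m ∈ Finset.range n, ent x m) / ent x (n - 1) - 1 := by
  have hJ := lt_ssaJ_iff hx
  have hnn := ent_nonneg_aux hx
  have hJn : ssaJ x ≤ n - 2 := by
    by_contra h
    have := (hJ (n - 2) (by omega)).1 (by omega)
    linarith
  have h0 : 0 < ent x 0 := lt_of_lt_of_le hpos (hx.2 _ _ (by omega))
  have hc : 0 < 1 - ent x (n - 1) := by linarith [hnn (n - 2)]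
  have hent : ∀ l : Fin n, x l = ent x l := by
    intro l; unfold ent; rw [dif_pos l.2]
  by_cases hz : ssaJ x = 0
  · have hT : ∀ m, ent (ssaT x) m = ent x m / (1 - ent x (n - 1)) := by
      intro m
      by_cases hm : m < n
      · have : ent (ssaT x) m = ssaT x ⟨m, hm⟩ := by
          conv_lhs => unfold ent
          rw [dif_pos hm]
        rw [this]
        unfold ssaT
        rw [if_pos hz, hent]
      · have h1 : ent (ssaT x) m = 0 := by unfold ent; rw [dif_neg hm]
        have h2 : ent x m = 0 := by unfold ent; rw [dif_neg hm]
        rw [h1, h2, zero_div]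
    have hle : ent x 0 ≤ 1 - ent x (n - 1) := by
      by_contra h
      have := (hJ 0 (by omega)).2 (by linarith)
      omega
    refine ⟨⟨?_, ?_⟩, ?_, ?_⟩
    · rw [hT, div_le_one hc]; exact hle
    · intro i j hij
      rw [hT, hT]
      exact div_le_div_of_nonneg_right (hx.2 i j hij) hc.le
    · rw [hT]; exact div_pos hpos hc
    · simp only [hT]
      rw [← Finset.sum_div]
      field_simp
      ring
  · have hT : ∀ m, m < n → ent (ssaT x) m =
        (if m + 1 < ssaJ x then ent x (m + 1) else if m + 1 = ssaJ x then 1 - ent x (n - 1)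
          else ent x m) / ent x 0 := by
      intro m hm
      have : ent (ssaT x) m = ssaT x ⟨m, hm⟩ := by
        conv_lhs => unfold ent
        rw [dif_pos hm]
      rw [this]
      unfold ssaT
      rw [if_neg hz]
      simp only [hent]
      split_ifs <;> rfl
    have hlast : ent (ssaT x) (n - 1) = ent x (n - 1) / ent x 0 := by
      rw [hT _ (by omega), if_neg (by omega), if_neg (by omega)]
    refine ⟨⟨?_, ?_⟩, ?_, ?_⟩
    · rw [hT 0 (by omega), div_le_one h0]
      split_ifs with h1 h2
      · exact hx.2 _ _ (by omega)
      · exact ((hJ 0 (by omega)).1 (by omega)).le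
      · exact le_rfl
    · have : Antitone (ent (ssaT x)) := by
        refine antitone_nat_of_succ_le ?_
        intro m
        by_cases hm : m + 1 < n
        · rw [hT m (by omega), hT (m + 1) hm]
          refine div_le_div_of_nonneg_right ?_ h0.le
          have a1 := hx.2 (m + 1) (m + 1 + 1) (by omega)
          have a2 := hx.2 m (m + 1) (by omega)
          have a3 := hJ (m + 1) hm
          split_ifs <;> first | omega | assumption | skip
          · exact (a3.1 (by omega)).le
          · by_contra h
            have := a3.2 (by linarith)
            omega
        · have h1 : ent (ssaT x) (m + 1) = 0 := by unfold ent; rw [dif_neg hm]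
          rw [h1]
          by_cases hm' : m < n
          · rw [hT m hm']
            refine div_nonneg ?_ h0.le
            split_ifs
            · exact hnn _
            · exact hc.le
            · exact hnn _
          · unfold ent; rw [dif_neg hm']
      exact fun i j hij => this hij
    · rw [hlast]; exact div_pos hpos h0
    · have hs := (sum_insert_aux (ent x) (1 - ent x (n - 1)) (ssaJ x) (by omega) n).2 (by omega)
      rw [Finset.sum_congr rfl (fun m hm => hT m (Finset.mem_range.1 hm)), ← Finset.sum_div,
        hlast, eq_sub_of_add_eq hs]
      field_simp
      ring

theorem ssa_reach {n : ℕ} (hn : 2 ≤ n) (k : ℕ) : ∀ x : Fin n → ℝ, x ∈ Bset n →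
    0 < ent x (n - 1) → (1 + ∑ m ∈ Finset.range n, ent x m) / ent x (n - 1) ≤ k →
    ∃ N : ℕ, ssaT^[N] x ∈
        {y : Fin n → ℝ | y ∈ Bset n ∧ 1 ≤ ent y (n - 2) + ent y (n - 1)} := by
  induction k with
  | zero =>
    intro x hx hpos hle
    exfalso
    have h1 : 0 ≤ ∑ m ∈ Finset.range n, ent x m :=
      Finset.sum_nonneg fun m _ => ent_nonneg_aux hx m
    have : 0 < (1 + ∑ m ∈ Finset.range n, ent x m) / ent x (n - 1) :=
      div_pos (by linarith) hpos
    simp only [Nat.cast_zero] at hle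
    linarith
  | succ k ih =>
    intro x hx hpos hle
    by_cases hD : 1 ≤ ent x (n - 2) + ent x (n - 1)
    · exact ⟨0, hx, hD⟩
    · obtain ⟨h1, h2, h3⟩ := ssa_step hn hx hpos (not_le.1 hD)
      push_cast at hle
      obtain ⟨N, hN⟩ := ih (ssaT x) h1 h2 (by rw [h3]; linarith)
      exact ⟨N + 1, by rw [Function.iterate_succ_apply]; exact hN⟩

open MeasureTheory in
/-- **`D` is reached almost surely.** For `n ≥ 2` and
`D = {x ∈ B^n : x_{n−1} + x_n ≥ 1}`, Lebesgue-almost every `x ∈ B^n` admits an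
`N = N(x) ∈ ℕ` with `T^N x ∈ D`; together with `T '' D = D` this says `D` is an
absorbing set for the SSA. -/
theorem ssa_absorbing_ae (n : ℕ) (hn : 2 ≤ n) :
    ∀ᵐ x ∂(volume : Measure (Fin n → ℝ)), x ∈ Bset n →
      ∃ N : ℕ, ssaT^[N] x ∈
        {y : Fin n → ℝ | y ∈ Bset n ∧ 1 ≤ ent y (n - 2) + ent y (n - 1)} := by
  have hne : ∀ᵐ x ∂(volume : Measure (Fin n → ℝ)), x ⟨n - 1, by omega⟩ ≠ 0 := by
    have := Measure.ae_eval_ne (μ := fun _ : Fin n => (volume : Measure ℝ)) ⟨n - 1, by omega⟩ 0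
    exact this
  filter_upwards [hne] with x h hx
  have he : ent x (n - 1) = x ⟨n - 1, by omega⟩ := by unfold ent; rw [dif_pos (by omega)]
  have hpos : 0 < ent x (n - 1) := lt_of_le_of_ne (ent_nonneg_aux hx _) (by rw [he]; exact h.symm)
  obtain ⟨k, hk⟩ := exists_nat_ge ((1 + ∑ m ∈ Finset.range n, ent x m) / ent x (n - 1))
  exact ssa_reach hn k x hx hpos hk
end

section
/- For the 2-dimensional SSA map T and the point x = (∛4 − 1, ∛2 − 1) ∈ B², one has T^{31} x = T x; that is, the SSA expansion of x is eventually periodic with preperiod length 1 and period length dividing 30. -/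
lemma ssaT_two (x y : ℝ) (hy : y ≤ x) : ssaT ![x, y] =
    if x ≤ 1 - y then ![x / (1 - y), y / (1 - y)]
    else if y ≤ 1 - y then ![(1 - y) / x, y / x] else ![y / x, (1 - y) / x] := by
  have e0 : ent ![x, y] 0 = x := by simp [ent]
  have e1 : ent ![x, y] 1 = y := by simp [ent]
  have hJ : ssaJ ![x, y] = (if 1 - y < x then 1 else 0) + (if 1 - y < y then 1 else 0) := by
    simp only [ssaJ, Finset.card_filter, Fin.sum_univ_two]
    simp [e1]
  unfold ssaT
  rw [hJ]
  by_cases h1 : x ≤ 1 - y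
  · have h2 : ¬ (1 - y < y) := by linarith
    have h3 : ¬ (1 - y < x) := by linarith
    funext i
    fin_cases i <;> simp [h1, h2, h3, e1]
  · have h3 : 1 - y < x := by linarith
    by_cases h2 : y ≤ 1 - y
    · have h4 : ¬ (1 - y < y) := by linarith
      funext i
      fin_cases i <;> simp [h1, h2, h3, h4, e0, e1]
    · have h4 : 1 - y < y := by linarith
      funext i
      fin_cases i <;> simp [h1, h2, h3, h4, e0, e1]

lemma stepA (a b c d : ℝ) (ha : 0 < a) (hd : d = a - c) (hd0 : 0 < d) (hcb : c ≤ b)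
    (h : b ≤ d) : ssaT ![b / a, c / a] = ![b / d, c / d] := by
  subst hd
  rw [ssaT_two _ _ (by (gcongr))]
  have e : 1 - c / a = (a - c) / a := by field_simp
  rw [e, if_pos (by (gcongr)), div_div_div_cancel_right₀ ha.ne', div_div_div_cancel_right₀ ha.ne']

lemma stepB (a b c d : ℝ) (ha : 0 < a) (hd : d = a - c) (hcb : c ≤ b)
    (h : d < b) (h' : c ≤ d) : ssaT ![b / a, c / a] = ![d / b, c / b] := by
  subst hd
  rw [ssaT_two _ _ (by (gcongr))]
  have e : 1 - c / a = (a - c) / a := by field_simp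
  rw [e, if_neg (not_le.2 (by (gcongr))), if_pos (by (gcongr)), div_div_div_cancel_right₀ ha.ne',
    div_div_div_cancel_right₀ ha.ne']

lemma stepC (a b c d : ℝ) (ha : 0 < a) (hd : d = a - c) (hcb : c ≤ b)
    (h' : d < c) : ssaT ![b / a, c / a] = ![c / b, d / b] := by
  subst hd
  have h : a - c < b := by linarith
  rw [ssaT_two _ _ (by (gcongr))]
  have e : 1 - c / a = (a - c) / a := by field_simp
  rw [e, if_neg (not_le.2 (by (gcongr))), if_neg (not_le.2 (by (gcongr))),
    div_div_div_cancel_right₀ ha.ne', div_div_div_cancel_right₀ ha.ne']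

set_option maxHeartbeats 4000000 in
lemma main_aux (t : ℝ) (ht : t ^ 3 = 2) (l : 1.2599210498 < t) (u : t < 1.2599210499)
    (l2 : 1.5874010519 < t ^ 2) (u2 : t ^ 2 < 1.5874010520) :
    ssaT^[31] ![t ^ 2 - 1, t - 1] = ssaT ![t ^ 2 - 1, t - 1] := by
  have s0 : (![t ^ 2 - 1, t - 1] : Fin 2 → ℝ) = ![(-1+0*t+1*t^2) / (1+0*t+0*t^2), (-1+1*t+0*t^2) / (1+0*t+0*t^2)] := by
    congr 1
    · ring
    · congr 1
      ring
  have s1 := stepA (1+0*t+0*t^2) (-1+0*t+1*t^2) (-1+1*t+0*t^2) (2-1*t+0*t^2)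
    (by linarith) (by ring) (by linarith) (by linarith) (by linarith)
  have s2 := stepB (2-1*t+0*t^2) (-1+0*t+1*t^2) (-1+1*t+0*t^2) (3-2*t+0*t^2)
    (by linarith) (by ring) (by linarith) (by linarith) (by linarith)
  have s3 := stepB (-1+0*t+1*t^2) (3-2*t+0*t^2) (-1+1*t+0*t^2) (0-1*t+1*t^2)
    (by linarith) (by ring) (by linarith) (by linarith) (by linarith)
  have s4 := stepC (3-2*t+0*t^2) (0-1*t+1*t^2) (-1+1*t+0*t^2) (4-3*t+0*t^2)
    (by linarith) (by ring) (by linarith) (by linarith)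
  have s5 := stepC (0-1*t+1*t^2) (-1+1*t+0*t^2) (4-3*t+0*t^2) (-4+2*t+1*t^2)
    (by linarith) (by ring) (by linarith) (by linarith)
  have s6 := stepB (-1+1*t+0*t^2) (4-3*t+0*t^2) (-4+2*t+1*t^2) (3-1*t-1*t^2)
    (by linarith) (by ring) (by linarith) (by linarith) (by linarith)
  have s7 := stepB (4-3*t+0*t^2) (3-1*t-1*t^2) (-4+2*t+1*t^2) (8-5*t-1*t^2)
    (by linarith) (by ring) (by linarith) (by linarith) (by linarith)
  have s8 := stepC (3-1*t-1*t^2) (8-5*t-1*t^2) (-4+2*t+1*t^2) (7-3*t-2*t^2)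
    (by linarith) (by ring) (by linarith) (by linarith)
  have s9 := stepB (8-5*t-1*t^2) (-4+2*t+1*t^2) (7-3*t-2*t^2) (1-2*t+1*t^2)
    (by linarith) (by ring) (by linarith) (by linarith) (by linarith)
  have s10 := stepB (-4+2*t+1*t^2) (1-2*t+1*t^2) (7-3*t-2*t^2) (-11+5*t+3*t^2)
    (by linarith) (by ring) (by linarith) (by linarith) (by linarith)
  have s11 := stepC (1-2*t+1*t^2) (-11+5*t+3*t^2) (7-3*t-2*t^2) (-6+1*t+3*t^2)
    (by linarith) (by ring) (by linarith) (by linarith)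
  have s12 := stepB (-11+5*t+3*t^2) (7-3*t-2*t^2) (-6+1*t+3*t^2) (-5+4*t+0*t^2)
    (by linarith) (by ring) (by linarith) (by linarith) (by linarith)
  have s13 := stepB (7-3*t-2*t^2) (-5+4*t+0*t^2) (-6+1*t+3*t^2) (13-4*t-5*t^2)
    (by linarith) (by ring) (by linarith) (by linarith) (by linarith)
  have s14 := stepC (-5+4*t+0*t^2) (13-4*t-5*t^2) (-6+1*t+3*t^2) (1+3*t-3*t^2)
    (by linarith) (by ring) (by linarith) (by linarith)
  have s15 := stepC (13-4*t-5*t^2) (-6+1*t+3*t^2) (1+3*t-3*t^2) (12-7*t-2*t^2)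
    (by linarith) (by ring) (by linarith) (by linarith)
  have s16 := stepB (-6+1*t+3*t^2) (1+3*t-3*t^2) (12-7*t-2*t^2) (-18+8*t+5*t^2)
    (by linarith) (by ring) (by linarith) (by linarith) (by linarith)
  have s17 := stepB (1+3*t-3*t^2) (-18+8*t+5*t^2) (12-7*t-2*t^2) (-11+10*t-1*t^2)
    (by linarith) (by ring) (by linarith) (by linarith) (by linarith)
  have s18 := stepB (-18+8*t+5*t^2) (-11+10*t-1*t^2) (12-7*t-2*t^2) (-30+15*t+7*t^2)
    (by linarith) (by ring) (by linarith) (by linarith) (by linarith)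
  have s19 := stepB (-11+10*t-1*t^2) (-30+15*t+7*t^2) (12-7*t-2*t^2) (-23+17*t+1*t^2)
    (by linarith) (by ring) (by linarith) (by linarith) (by linarith)
  have s20 := stepC (-30+15*t+7*t^2) (-23+17*t+1*t^2) (12-7*t-2*t^2) (-42+22*t+9*t^2)
    (by linarith) (by ring) (by linarith) (by linarith)
  have s21 := stepC (-23+17*t+1*t^2) (12-7*t-2*t^2) (-42+22*t+9*t^2) (19-5*t-8*t^2)
    (by linarith) (by ring) (by linarith) (by linarith)
  have s22 := stepB (12-7*t-2*t^2) (-42+22*t+9*t^2) (19-5*t-8*t^2) (-7-2*t+6*t^2)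
    (by linarith) (by ring) (by linarith) (by linarith) (by linarith)
  have s23 := stepB (-42+22*t+9*t^2) (-7-2*t+6*t^2) (19-5*t-8*t^2) (-61+27*t+17*t^2)
    (by linarith) (by ring) (by linarith) (by linarith) (by linarith)
  have s24 := stepB (-7-2*t+6*t^2) (-61+27*t+17*t^2) (19-5*t-8*t^2) (-26+3*t+14*t^2)
    (by linarith) (by ring) (by linarith) (by linarith) (by linarith)
  have s25 := stepB (-61+27*t+17*t^2) (-26+3*t+14*t^2) (19-5*t-8*t^2) (-80+32*t+25*t^2)
    (by linarith) (by ring) (by linarith) (by linarith) (by linarith)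
  have s26 := stepB (-26+3*t+14*t^2) (-80+32*t+25*t^2) (19-5*t-8*t^2) (-45+8*t+22*t^2)
    (by linarith) (by ring) (by linarith) (by linarith) (by linarith)
  have s27 := stepB (-80+32*t+25*t^2) (-45+8*t+22*t^2) (19-5*t-8*t^2) (-99+37*t+33*t^2)
    (by linarith) (by ring) (by linarith) (by linarith) (by linarith)
  have s28 := stepC (-45+8*t+22*t^2) (-99+37*t+33*t^2) (19-5*t-8*t^2) (-64+13*t+30*t^2)
    (by linarith) (by ring) (by linarith) (by linarith)
  have s29 := stepC (-99+37*t+33*t^2) (19-5*t-8*t^2) (-64+13*t+30*t^2) (-35+24*t+3*t^2)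
    (by linarith) (by ring) (by linarith) (by linarith)
  have s30 := stepB (19-5*t-8*t^2) (-64+13*t+30*t^2) (-35+24*t+3*t^2) (54-29*t-11*t^2)
    (by linarith) (by ring) (by linarith) (by linarith) (by linarith)
  have s31 := stepB (-64+13*t+30*t^2) (54-29*t-11*t^2) (-35+24*t+3*t^2) (-29-11*t+27*t^2)
    (by linarith) (by ring) (by linarith) (by linarith) (by linarith)
  rw [s0]
  simp only [Function.iterate_succ_apply, Function.iterate_zero, id]
  rw [s1, s2, s3, s4, s5, s6, s7, s8, s9, s10, s11, s12, s13, s14, s15, s16, s17, s18, s19, s20, s21, s22, s23, s24, s25, s26, s27, s28, s29, s30, s31]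
  have hp : (0 : ℝ) < (54-29*t-11*t^2) := by linarith
  have hq : (0 : ℝ) < (2-1*t+0*t^2) := by linarith
  congr 1
  · rw [div_eq_div_iff hp.ne' hq.ne']
    linear_combination (2 + 11 * t) * ht
  · congr 1
    rw [div_eq_div_iff hp.ne' hq.ne']
    linear_combination (8 + 0 * t) * ht

/-- **A periodic SSA expansion.** For the 2-dimensional SSA map `T` and the point
`x = (∛4 − 1, ∛2 − 1) ∈ B²`, one has `T^31 x = T x`: the SSA expansion of `x` is
eventually periodic with preperiod length 1 and period length dividing 30. -/
theorem ssa_periodic_example :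
    ssaT^[31] ![(4 : ℝ) ^ ((1 : ℝ) / 3) - 1, (2 : ℝ) ^ ((1 : ℝ) / 3) - 1]
      = ssaT ![(4 : ℝ) ^ ((1 : ℝ) / 3) - 1, (2 : ℝ) ^ ((1 : ℝ) / 3) - 1] := by
  have h3 : ((2 : ℝ) ^ ((1 : ℝ) / 3)) ^ 3 = 2 := by
    rw [← Real.rpow_natCast, ← Real.rpow_mul (by norm_num)]
    norm_num
  have h4 : (4 : ℝ) ^ ((1 : ℝ) / 3) = ((2 : ℝ) ^ ((1 : ℝ) / 3)) ^ 2 := by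
    rw [← Real.rpow_natCast, ← Real.rpow_mul (by norm_num), mul_comm, Real.rpow_mul (by norm_num)]
    norm_num
  have h0 : (0 : ℝ) ≤ (2 : ℝ) ^ ((1 : ℝ) / 3) := by positivity
  rw [h4]
  generalize (2 : ℝ) ^ ((1 : ℝ) / 3) = t at *
  have l : 1.25992104989 < t := lt_of_pow_lt_pow_left₀ 3 h0 (by rw [h3]; norm_num)
  have u : t < 1.259921049895 := lt_of_pow_lt_pow_left₀ 3 (by norm_num) (by rw [h3]; norm_num)
  refine main_aux t h3 (by linarith) (by linarith) ?_ ?_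
  · nlinarith
  · nlinarith
end

section
/- For every n ≥ 1 and every integer k ≥ 1, the restriction of the MSA map S to the cell B(k) := {x ∈ B^n : 1/(k+1) < x_n ≤ 1/k} is injective. -/
open Matrix Filter

/-- The MSA digit `k = ⌊1/x_n⌋`. -/
noncomputable def msaDigit {n : ℕ} (x : Fin n → ℝ) : ℤ :=
  ⌊(ent x (n - 1))⁻¹⌋

/-- The multiplicative Selmer algorithm (MSA) map
`S(x₁,…,x_n) = (x₂/x₁, …, x_n/x₁, (1 − k·x_n)/x₁)` with `k = ⌊1/x_n⌋`. -/
noncomputable def msaS {n : ℕ} (x : Fin n → ℝ) : Fin n → ℝ := fun i =>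
  if (i : ℕ) + 1 < n then ent x ((i : ℕ) + 1) / ent x 0
  else (1 - (msaDigit x : ℝ) * ent x (n - 1)) / ent x 0

/-- **Injectivity of the MSA on each cell.** For every `n ≥ 1` and every integer `k ≥ 1`,
the restriction of the MSA map `S` to the cell
`B(k) = {x ∈ B^n : 1/(k+1) < x_n ≤ 1/k}` is injective. -/
theorem msa_injOn_cells (n : ℕ) (hn : 1 ≤ n) (k : ℤ) (hk : 1 ≤ k) :
    Set.InjOn msaS
      {x : Fin n → ℝ | x ∈ Bset n ∧
        1 / ((k : ℝ) + 1) < ent x (n - 1) ∧ ent x (n - 1) ≤ 1 / (k : ℝ)} := by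
  have hk0 : (0 : ℝ) < k := by exact_mod_cast (by omega : (0 : ℤ) < k)
  have key : ∀ z : Fin n → ℝ, (z ∈ Bset n ∧
      1 / ((k : ℝ) + 1) < ent z (n - 1) ∧ ent z (n - 1) ≤ 1 / (k : ℝ)) →
      0 < ent z 0 ∧ msaDigit z = k := by
    rintro z ⟨hz, h1, h2⟩
    have hp : 0 < ent z (n - 1) := lt_trans (by positivity) h1
    refine ⟨lt_of_lt_of_le hp (hz.2 0 (n - 1) (Nat.zero_le _)), ?_⟩
    unfold msaDigit
    rw [Int.floor_eq_iff, ← one_div]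
    constructor
    · rw [le_div_iff₀ hp]
      rw [le_div_iff₀ hk0] at h2
      linarith
    · rw [div_lt_iff₀ hp]
      rw [div_lt_iff₀ (by linarith)] at h1
      linarith
  intro x hx y hy hxy
  obtain ⟨x0, dx⟩ := key x hx
  obtain ⟨y0, dy⟩ := key y hy
  have hr : ∀ m, m < n → ent x m / ent x 0 = ent y m / ent y 0 := by
    intro m hm
    cases m with
    | zero => rw [div_self x0.ne', div_self y0.ne']
    | succ m =>
      have h := congrFun hxy ⟨m, by omega⟩
      simpa [msaS, hm] using h
  have hl := congrFun hxy ⟨n - 1, by omega⟩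
  have hnn : ¬ (n - 1 + 1 < n) := by omega
  simp only [msaS, hnn, if_false, dx, dy, sub_div, mul_div_assoc] at hl
  rw [hr (n - 1) (by omega)] at hl
  have h1 : 1 / ent x 0 = 1 / ent y 0 := by linarith
  have h0 : ent x 0 = ent y 0 := by
    rw [one_div, one_div] at h1
    exact inv_injective h1
  funext i
  have h := hr i i.2
  rw [h0] at h
  have h' := (div_left_inj' y0.ne').1 h
  simpa [ent] using h'
end

section
/- For n = 2 and every integer k ≥ 1, the image of the cylinder B(k) := {x ∈ B² : 1/(k+1) < x₂ ≤ 1/k} under the 2-dimensional MSA map S is exactly S '' B(k) = {y ∈ B² : y₂ < y₁ and k·y₁ + y₂ ≥ 1}. Consequently S '' B(k) ⊊ S '' B(k+1) for all k ≥ 1, and no cylinder of rank 1 is full, i.e. S '' B(k) ≠ B² for every k. -/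
open Matrix Filter

/-- The rank-1 cylinder `B(k) = {x ∈ B² : 1/(k+1) < x₂ ≤ 1/k}` of the 2-dimensional MSA. -/
noncomputable def msaCell2 (k : ℤ) : Set (Fin 2 → ℝ) :=
  {x | x ∈ Bset 2 ∧ 1 / ((k : ℝ) + 1) < x 1 ∧ x 1 ≤ 1 / (k : ℝ)}

theorem mem_Bset_two (x : Fin 2 → ℝ) :
    x ∈ Bset 2 ↔ x 0 ≤ 1 ∧ x 1 ≤ x 0 ∧ 0 ≤ x 1 := by
  have e0 : ent x 0 = x 0 := by simp [ent]
  have e1 : ent x 1 = x 1 := by simp [ent]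
  have e2 : ∀ m, 2 ≤ m → ent x m = 0 := fun m hm => by
    simp only [ent]
    rw [dif_neg (by omega)]
  constructor
  · rintro ⟨h, h'⟩
    have h1 := h' 0 1 (by norm_num)
    have h2 := h' 1 2 (by norm_num)
    rw [e0] at h
    rw [e0, e1] at h1
    rw [e1, e2 2 le_rfl] at h2
    exact ⟨h, h1, h2⟩
  · rintro ⟨h, h1, h2⟩
    refine ⟨by rw [e0]; exact h, fun i j hij => ?_⟩
    rcases i with _ | _ | i <;> rcases j with _ | _ | j
    · exact le_rfl
    · simp only [zero_add]
      rw [e0, e1]; exact h1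
    · rw [e2 _ (by omega), e0]; linarith
    · omega
    · exact le_rfl
    · simp only [zero_add]
      rw [e2 _ (by omega), e1]; exact h2
    · omega
    · omega
    · rw [e2 _ (by omega), e2 _ (by omega)]

theorem msaDigit_cell (k : ℤ) (hk : 1 ≤ k) (x : Fin 2 → ℝ)
    (h1 : 1 / ((k : ℝ) + 1) < x 1) (h2 : x 1 ≤ 1 / (k : ℝ)) : msaDigit x = k := by
  have hk' : (1 : ℝ) ≤ k := by exact_mod_cast hk
  have hx : 0 < x 1 := lt_trans (by positivity) h1
  have e1 : ent x (2 - 1) = x 1 := by simp [ent]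
  rw [msaDigit, e1, Int.floor_eq_iff]
  rw [div_lt_iff₀ (by positivity)] at h1
  rw [le_div_iff₀ (by positivity)] at h2
  constructor
  · rw [← one_div, le_div_iff₀ hx]; linarith
  · rw [← one_div, div_lt_iff₀ hx]; linarith

theorem msaS_cell (k : ℤ) (hk : 1 ≤ k) (x : Fin 2 → ℝ)
    (h1 : 1 / ((k : ℝ) + 1) < x 1) (h2 : x 1 ≤ 1 / (k : ℝ)) :
    msaS x 0 = x 1 / x 0 ∧ msaS x 1 = (1 - k * x 1) / x 0 := by
  constructor
  · simp [msaS, ent]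
  · simp [msaS, ent, msaDigit_cell k hk x h1 h2]

theorem msa_image (k : ℤ) (hk : 1 ≤ k) :
    msaS '' msaCell2 k
        = {y : Fin 2 → ℝ | y ∈ Bset 2 ∧ y 1 < y 0 ∧ 1 ≤ (k : ℝ) * y 0 + y 1} := by
  have hk' : (1 : ℝ) ≤ k := by exact_mod_cast hk
  ext y
  simp only [Set.mem_image, Set.mem_setOf_eq, msaCell2, mem_Bset_two]
  constructor
  · rintro ⟨x, ⟨⟨hx0, hx10, hx1⟩, h1, h2⟩, rfl⟩
    obtain ⟨e0, e1⟩ := msaS_cell k hk x h1 h2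
    rw [e0, e1]
    have hp1 : 0 < x 1 := lt_trans (by positivity) h1
    have hp0 : 0 < x 0 := by linarith
    rw [div_lt_iff₀ (by positivity)] at h1
    rw [le_div_iff₀ (by positivity)] at h2
    have hlt : (1 - k * x 1) / x 0 < x 1 / x 0 :=
      div_lt_div_of_pos_right (by linarith) hp0
    refine ⟨⟨?_, hlt.le, div_nonneg (by linarith) hp0.le⟩, hlt, ?_⟩
    · rw [div_le_one hp0]; exact hx10
    · have : (k : ℝ) * (x 1 / x 0) + (1 - k * x 1) / x 0 = 1 / x 0 := by
        field_simp; ring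
      rw [this, le_div_iff₀ hp0]; linarith
  · rintro ⟨⟨hy0, hy10, hy1⟩, hlt, hge⟩
    set d : ℝ := k * y 0 + y 1 with hd
    have hdp : 0 < d := by linarith
    have hyp : 0 < y 0 := by linarith
    have c1 : 1 / ((k : ℝ) + 1) < (![1 / d, y 0 / d] : Fin 2 → ℝ) 1 := by
      show 1 / ((k : ℝ) + 1) < y 0 / d
      rw [div_lt_div_iff₀ (by positivity) hdp]; linarith
    have c2 : (![1 / d, y 0 / d] : Fin 2 → ℝ) 1 ≤ 1 / (k : ℝ) := by
      show y 0 / d ≤ 1 / (k : ℝ)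
      rw [div_le_div_iff₀ hdp (by positivity)]; linarith
    refine ⟨![1 / d, y 0 / d], ⟨⟨?_, ?_, ?_⟩, c1, c2⟩, ?_⟩
    · show 1 / d ≤ 1
      rw [div_le_one hdp]; exact hge
    · show y 0 / d ≤ 1 / d
      exact div_le_div_of_nonneg_right hy0 hdp.le
    · show 0 ≤ y 0 / d
      positivity
    · obtain ⟨e0, e1⟩ := msaS_cell k hk _ c1 c2
      ext i
      fin_cases i
      · refine e0.trans ?_
        show y 0 / d / (1 / d) = y 0
        field_simp
      · refine e1.trans ?_
        show (1 - k * (y 0 / d)) / (1 / d) = y 1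
        have : (1 - k * (y 0 / d)) / (1 / d) = d - k * y 0 := by field_simp
        rw [this, hd]; ring

/-- **No cylinder of the 2-dimensional MSA is full.** For every integer `k ≥ 1`,
`S '' B(k) = {y ∈ B² : y₂ < y₁ and k·y₁ + y₂ ≥ 1}`; consequently
`S '' B(k) ⊊ S '' B(k+1)` for all `k ≥ 1`, and no rank-1 cylinder is full:
`S '' B(k) ≠ B²` for every `k ≥ 1`. -/
theorem msa_cylinder_image (k : ℤ) (hk : 1 ≤ k) :
    msaS '' msaCell2 k
        = {y : Fin 2 → ℝ | y ∈ Bset 2 ∧ y 1 < y 0 ∧ 1 ≤ (k : ℝ) * y 0 + y 1} ∧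
      msaS '' msaCell2 k ⊂ msaS '' msaCell2 (k + 1) ∧
      ∀ k' : ℤ, 1 ≤ k' → msaS '' msaCell2 k' ≠ Bset 2 := by
  have hk' : (1 : ℝ) ≤ k := by exact_mod_cast hk
  refine ⟨msa_image k hk, ?_, ?_⟩
  · rw [msa_image k hk, msa_image (k + 1) (by omega), Set.ssubset_iff_of_subset]
    · refine ⟨![1 / ((k : ℝ) + 1), 0], ?_, ?_⟩
      · simp only [Set.mem_setOf_eq, mem_Bset_two, Matrix.cons_val_zero, Matrix.cons_val_one]
        have hp : 0 < 1 / ((k : ℝ) + 1) := by positivity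
        refine ⟨⟨?_, hp.le, le_rfl⟩, hp, ?_⟩
        · rw [div_le_one (by positivity)]; linarith
        · push_cast
          rw [mul_one_div_cancel (by positivity)]; simp
      · rintro ⟨-, -, h⟩
        simp only [Matrix.cons_val_zero, Matrix.cons_val_one] at h
        rw [add_zero, mul_one_div, le_div_iff₀ (by positivity)] at h
        linarith
    · rintro y ⟨hB, hlt, hge⟩
      refine ⟨hB, hlt, ?_⟩
      have := (mem_Bset_two y).1 hB
      push_cast
      nlinarith
  · intro k' hk' h
    have h0 : (0 : Fin 2 → ℝ) ∈ Bset 2 := by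
      rw [mem_Bset_two]; simp
    rw [← h, msa_image k' hk'] at h0
    exact lt_irrefl _ h0.2.1
end

section
/- For every n ≥ 1 and every integer k ≥ 1, all entries of the matrix power β(k)^p are strictly positive for every p ≥ n² + 1. -/
open Matrix Filter

/-- The Selmer matrix `β(k)`: the `(n+1)×(n+1)` real matrix (rows and columns indexed by
`0,…,n`) whose only nonzero entries are `β(k)_{0,n−1} = k`, `β(k)_{0,n} = 1`, and
`β(k)_{i,i−1} = 1` for `1 ≤ i ≤ n`. -/
noncomputable def selmerBeta (n : ℕ) (k : ℤ) : Matrix (Fin (n + 1)) (Fin (n + 1)) ℝ :=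
  Matrix.of fun i j =>
    if (i : ℕ) = 0 ∧ (j : ℕ) = n - 1 then (k : ℝ)
    else if (i : ℕ) = 0 ∧ (j : ℕ) = n then 1
    else if (j : ℕ) + 1 = (i : ℕ) then 1 else 0

lemma sb_nonneg (n : ℕ) (k : ℤ) (hk : 1 ≤ k) (i j) : 0 ≤ selmerBeta n k i j := by
  have : (1:ℝ) ≤ k := by exact_mod_cast hk
  simp only [selmerBeta, Matrix.of_apply]
  split_ifs <;> linarith

lemma sb_pow_nonneg (n : ℕ) (k : ℤ) (hk : 1 ≤ k) (p : ℕ) : ∀ i j, 0 ≤ (selmerBeta n k ^ p) i j := by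
  induction p with
  | zero =>
    intro i j
    rw [pow_zero, Matrix.one_apply]
    split_ifs <;> norm_num
  | succ p ih =>
    intro i j
    rw [pow_succ, Matrix.mul_apply]
    exact Finset.sum_nonneg fun l _ => mul_nonneg (ih i l) (sb_nonneg n k hk l j)

lemma sb_comp (n : ℕ) (k : ℤ) (hk : 1 ≤ k) {a b : ℕ} {i l j : Fin (n + 1)}
    (h1 : 0 < (selmerBeta n k ^ a) i l) (h2 : 0 < (selmerBeta n k ^ b) l j) :
    0 < (selmerBeta n k ^ (a + b)) i j := by
  rw [pow_add, Matrix.mul_apply]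
  exact Finset.sum_pos' (fun m _ => mul_nonneg (sb_pow_nonneg n k hk a i m)
    (sb_pow_nonneg n k hk b m j)) ⟨l, Finset.mem_univ _, mul_pos h1 h2⟩

lemma sb_edge (n : ℕ) (k : ℤ) (hk : 1 ≤ k) {i j : Fin (n + 1)}
    (h : ((i : ℕ) = 0 ∧ (j : ℕ) = n - 1) ∨ ((i : ℕ) = 0 ∧ (j : ℕ) = n) ∨ (j : ℕ) + 1 = i) :
    0 < (selmerBeta n k ^ 1) i j := by
  have : (1:ℝ) ≤ k := by exact_mod_cast hk
  rw [pow_one]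
  simp only [selmerBeta, Matrix.of_apply]
  split_ifs
  · linarith
  · norm_num
  · norm_num
  · tauto

lemma sb_desc (n : ℕ) (k : ℤ) (hk : 1 ≤ k) (d : ℕ) : ∀ i j : Fin (n + 1), (i : ℕ) = j + d →
    0 < (selmerBeta n k ^ d) i j := by
  induction d with
  | zero =>
    intro i j h
    have : i = j := Fin.ext (by simpa using h)
    subst this
    simp
  | succ d ih =>
    intro i j h
    have hi := i.isLt
    exact sb_comp n k hk (ih i ⟨j + 1, by omega⟩ (by simp only; omega))
      (sb_edge n k hk (Or.inr (Or.inr rfl)))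

lemma sb_last (n : ℕ) (hn : 1 ≤ n) (k : ℤ) (hk : 1 ≤ k) (j : Fin (n + 1)) :
    0 < (selmerBeta n k ^ (n + 1 - (j : ℕ))) 0 j := by
  have hj := j.isLt
  have h := sb_comp n k hk (sb_edge n k hk (i := 0) (j := ⟨n, by omega⟩)
    (Or.inr (Or.inl ⟨rfl, rfl⟩))) (sb_desc n k hk (n - j) ⟨n, by omega⟩ j (by simp only; omega))
  rwa [show 1 + (n - (j : ℕ)) = n + 1 - j by omega] at h

lemma sb_last' (n : ℕ) (hn : 1 ≤ n) (k : ℤ) (hk : 1 ≤ k) (j : Fin (n + 1)) (hj : (j : ℕ) < n) :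
    0 < (selmerBeta n k ^ (n - (j : ℕ))) 0 j := by
  have h := sb_comp n k hk (sb_edge n k hk (i := 0) (j := ⟨n - 1, by omega⟩)
    (Or.inl ⟨rfl, rfl⟩)) (sb_desc n k hk (n - 1 - j) ⟨n - 1, by omega⟩ j (by simp only; omega))
  rwa [show 1 + (n - 1 - (j : ℕ)) = n - j by omega] at h

lemma sb_cyc (n : ℕ) (hn : 1 ≤ n) (k : ℤ) (hk : 1 ≤ k) (q : ℕ) : ∀ r, r ≤ q →
    0 < (selmerBeta n k ^ (q * n + r)) 0 0 := by
  induction q with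
  | zero =>
    intro r hr
    obtain rfl : r = 0 := by omega
    simp
  | succ q ih =>
    intro r hr
    rcases Nat.lt_or_ge q r with h | h
    · have := sb_comp n k hk (ih (r - 1) (by omega)) (sb_last n hn k hk 0)
      rwa [show q * n + (r - 1) + (n + 1 - ((0 : Fin (n+1)) : ℕ)) = (q + 1) * n + r by
        rw [Fin.val_zero, Nat.add_mul]; omega] at this
    · have := sb_comp n k hk (ih r h) (sb_last' n hn k hk 0 (by rw [Fin.val_zero]; omega))
      rwa [show q * n + r + (n - ((0 : Fin (n+1)) : ℕ)) = (q + 1) * n + r by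
        rw [Fin.val_zero, Nat.add_mul]; omega] at this

lemma sb_repr (n : ℕ) (hn : 1 ≤ n) (m : ℕ) (hm : n * (n - 1) ≤ m) :
    ∃ q r, m = q * n + r ∧ r ≤ q ∧ r < n := by
  refine ⟨m / n, m % n, by rw [mul_comm]; exact (Nat.div_add_mod m n).symm, ?_, Nat.mod_lt _ hn⟩
  have h1 := Nat.mod_lt m hn
  have h2 : n - 1 ≤ m / n := (Nat.le_div_iff_mul_le hn).2 (by rwa [mul_comm])
  omega

/-- **Positivity of powers of the Selmer matrix.** For every `n ≥ 1` and every integer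
`k ≥ 1`, all entries of `β(k)^p` are strictly positive for every `p ≥ n² + 1`. -/
theorem selmerBeta_pow_pos (n : ℕ) (hn : 1 ≤ n) (k : ℤ) (hk : 1 ≤ k)
    (p : ℕ) (hp : n ^ 2 + 1 ≤ p) :
    ∀ i j : Fin (n + 1), 0 < (selmerBeta n k ^ p) i j := by
  intro i j
  have hi := i.isLt
  have hj := j.isLt
  have hsq : n ^ 2 = n * (n - 1) + n := by
    obtain ⟨m, rfl⟩ : ∃ m, n = m + 1 := ⟨n - 1, by omega⟩
    simp only [Nat.add_sub_cancel]; ring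
  have hi0 := sb_desc n k hk i i 0 (by simp)
  rcases Nat.lt_or_ge (j : ℕ) n with h | h
  · obtain ⟨q, r, e, hr, hrn⟩ := sb_repr n hn (p - i + j) (by omega)
    obtain ⟨q, rfl⟩ : ∃ t, q = t + 1 := by
      refine ⟨q - 1, ?_⟩
      rcases Nat.eq_zero_or_pos q with rfl | h0
      · omega
      · omega
    rw [Nat.add_mul, one_mul] at e
    rcases Nat.lt_or_ge q r with h' | h'
    · have := sb_comp n k hk (sb_comp n k hk hi0 (sb_cyc n hn k hk q (r - 1) (by omega)))
        (sb_last n hn k hk j)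
      rwa [show (i : ℕ) + (q * n + (r - 1)) + (n + 1 - (j : ℕ)) = p by omega] at this
    · have := sb_comp n k hk (sb_comp n k hk hi0 (sb_cyc n hn k hk q r h'))
        (sb_last' n hn k hk j h)
      rwa [show (i : ℕ) + (q * n + r) + (n - (j : ℕ)) = p by omega] at this
  · obtain ⟨q, r, e, hr, hrn⟩ := sb_repr n hn (p - i - 1) (by omega)
    have := sb_comp n k hk (sb_comp n k hk hi0 (sb_cyc n hn k hk q r hr))
        (sb_last n hn k hk j)
    rwa [show (i : ℕ) + (q * n + r) + (n + 1 - (j : ℕ)) = p by omega] at this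
end

section
/- Let x ∈ B^n have MSA orbit defined for all times, and suppose the MSA expansion of x is eventually periodic: there exist m ≥ 0 and p ≥ 1 with S^{m+p} x = S^m x. Then for every i ∈ {1,…,n}, the ratio (β^{(s)})_{i,n−1} / (β^{(s)})_{0,n−1} converges to x_i as s → ∞; i.e. the periodic multiplicative Selmer algorithm is weakly convergent. -/
open Matrix Filter

/-- `β^{(s)} = β(k₁)β(k₂)⋯β(k_s)` for the MSA digits `k_s = ⌊1/(S^{s−1}x)_n⌋` of `x`
(with `β^{(0)}` the identity matrix). -/
noncomputable def msaBeta (n : ℕ) (x : Fin n → ℝ) (s : ℕ) :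
    Matrix (Fin (n + 1)) (Fin (n + 1)) ℝ :=
  ((List.range s).map fun t => selmerBeta n (msaDigit (msaS^[t] x))).prod


/-- Product of `s` consecutive matrices starting at index `t`. -/
noncomputable def blkProd {ι : Type} [Fintype ι] [DecidableEq ι] (A : ℕ → Matrix ι ι ℝ) (t s : ℕ) :
    Matrix ι ι ℝ := ((List.range s).map fun u => A (t + u)).prod

section abstract_part
variable {ι : Type} [Fintype ι] [DecidableEq ι] (A : ℕ → Matrix ι ι ℝ)

lemma blkProd_zero (t : ℕ) : blkProd A t 0 = 1 := by simp [blkProd]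

lemma blkProd_add (t a b : ℕ) : blkProd A t (a + b) = blkProd A t a * blkProd A (t + a) b := by
  simp only [blkProd, List.range_add, List.map_append, List.prod_append, List.map_map]
  congr 3
  funext u
  simp [Function.comp, add_assoc]

lemma blkProd_one (t : ℕ) : blkProd A t 1 = A t := by simp [blkProd]

lemma blkProd_nonneg (h0 : ∀ s i j, 0 ≤ A s i j) (t s : ℕ) (i j : ι) : 0 ≤ blkProd A t s i j := by
  induction s generalizing i j with
  | zero => rw [blkProd_zero, Matrix.one_apply]; split_ifs <;> norm_num
  | succ s ih =>
    rw [blkProd_add, blkProd_one, Matrix.mul_apply]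
    exact Finset.sum_nonneg fun l _ => mul_nonneg (ih i l) (h0 _ _ _)

lemma blkProd_row (h1 : ∀ s i, ∑ j, A s i j = 1) (t s : ℕ) (i : ι) :
    ∑ j, blkProd A t s i j = 1 := by
  induction s generalizing i with
  | zero => rw [blkProd_zero]; simp [Matrix.one_apply]
  | succ s ih =>
    rw [blkProd_add, blkProd_one]
    simp only [Matrix.mul_apply]
    rw [Finset.sum_comm]
    simp only [← Finset.mul_sum, h1, mul_one, ih]

/-- uniform lower bound along a walk of length `L` -/
def Wlk (ε : ℝ) (L : ℕ) (i j : ι) : Prop := ∀ t, ε ^ L ≤ blkProd A t L i j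

lemma Wlk.trans {A : ℕ → Matrix ι ι ℝ} (h0 : ∀ s i j, 0 ≤ A s i j) {ε : ℝ} (hε : 0 < ε)
    {L L' : ℕ} {i l j : ι} (h : Wlk A ε L i l) (h' : Wlk A ε L' l j) : Wlk A ε (L + L') i j := by
  intro t
  rw [blkProd_add, Matrix.mul_apply, pow_add]
  refine (mul_le_mul (h t) (h' (t + L)) (by positivity) (blkProd_nonneg A h0 _ _ _ _)).trans ?_
  exact Finset.single_le_sum (f := fun l => blkProd A t L i l * blkProd A (t + L) L' l j)
    (fun l _ => mul_nonneg (blkProd_nonneg A h0 _ _ _ _) (blkProd_nonneg A h0 _ _ _ _))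
    (Finset.mem_univ l)

lemma Wlk.refl (ε : ℝ) (i : ι) : Wlk A ε 0 i i := by
  intro t; simp [blkProd_zero]

lemma Wlk.step {ε : ℝ} {i j : ι} (h : ∀ t, ε ≤ A t i j) : Wlk A ε 1 i j := by
  intro t; simpa [blkProd_one] using h t

lemma osc_contract (B : Matrix ι ι ℝ) (w : ι → ℝ) (δ d : ℝ) (hδ : 0 < δ)
    (hB : ∀ i j, δ ≤ B i j) (h1 : ∀ i, ∑ j, B i j = 1) (hd : ∀ i j, w i - w j ≤ d) (i i' : ι) :
    (∑ l, B i l * w l) - (∑ l, B i' l * w l) ≤ (1 - δ) * d := by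
  have : Nonempty ι := ⟨i⟩
  obtain ⟨a, ha⟩ := Finite.exists_min w
  obtain ⟨b, hb⟩ := Finite.exists_max w
  have hlo : w a ≤ ∑ l, B i' l * w l := by
    calc w a = ∑ l, B i' l * w a := by rw [← Finset.sum_mul, h1, one_mul]
      _ ≤ _ := Finset.sum_le_sum fun l _ => mul_le_mul_of_nonneg_left (ha l) (hδ.le.trans (hB _ _))
  have hhi : B i a * (w b - w a) ≤ w b - ∑ l, B i l * w l := by
    have : w b - ∑ l, B i l * w l = ∑ l, B i l * (w b - w l) := by
      simp only [mul_sub, Finset.sum_sub_distrib]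
      rw [← Finset.sum_mul, h1, one_mul]
    rw [this]
    exact Finset.single_le_sum (f := fun l => B i l * (w b - w l))
      (fun l _ => mul_nonneg (hδ.le.trans (hB _ _)) (sub_nonneg.2 (hb l))) (Finset.mem_univ a)
  have h3 : δ * (w b - w a) ≤ B i a * (w b - w a) :=
    mul_le_mul_of_nonneg_right (hB _ _) (sub_nonneg.2 (ha b))
  have hδ1 : δ ≤ 1 := by
    refine (hB i a).trans ?_
    rw [← h1 i]
    exact Finset.single_le_sum (f := fun l => B i l) (fun l _ => hδ.le.trans (hB _ _))
      (Finset.mem_univ a)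
  have h4 : (1 - δ) * (w b - w a) ≤ (1 - δ) * d :=
    mul_le_mul_of_nonneg_left (hd b a) (by linarith)
  nlinarith

lemma osc_bound (h0 : ∀ s i j, 0 ≤ A s i j) (h1 : ∀ s i, ∑ j, A s i j = 1) (N : ℕ) (δ : ℝ)
    (hδ : 0 < δ) (hN : ∀ t i j, δ ≤ blkProd A t N i j) (q r t : ℕ) (i i' j : ι) :
    blkProd A t (q * N + r) i j - blkProd A t (q * N + r) i' j ≤ (1 - δ) ^ q := by
  induction q generalizing t i i' with
  | zero =>
    have h2 := blkProd_nonneg A h0 t (0 * N + r) i' j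
    have h3 : blkProd A t (0 * N + r) i j ≤ 1 := by
      rw [← blkProd_row A h1 t (0 * N + r) i]
      exact Finset.single_le_sum (f := fun l => blkProd A t (0 * N + r) i l)
        (fun l _ => blkProd_nonneg A h0 _ _ _ _) (Finset.mem_univ j)
    simp only [pow_zero]; linarith
  | succ q ih =>
    have : (q + 1) * N + r = N + (q * N + r) := by ring
    rw [this, blkProd_add, Matrix.mul_apply, Matrix.mul_apply, pow_succ']
    exact osc_contract _ (fun l => blkProd A (t + N) (q * N + r) l j) δ _ hδ (hN t)
      (blkProd_row A h1 t N) (fun a b => ih (t + N) a b) i i'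

lemma ratio_tendsto (h0 : ∀ s i j, 0 ≤ A s i j) (h1 : ∀ s i, ∑ j, A s i j = 1) (N : ℕ)
    (hNpos : 0 < N) (δ : ℝ)
    (hδ : 0 < δ) (hN : ∀ t i j, δ ≤ blkProd A t N i j) (i i' j : ι) :
    Tendsto (fun s => blkProd A 0 s i j / blkProd A 0 s i' j) atTop (nhds 1) := by
  have hδ1 : δ ≤ 1 := by
    refine (hN 0 i j).trans ?_
    rw [← blkProd_row A h1 0 N i]
    exact Finset.single_le_sum (f := fun l => blkProd A 0 N i l)
      (fun l _ => blkProd_nonneg A h0 _ _ _ _) (Finset.mem_univ j)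
  have hlow : ∀ s, N ≤ s → δ ≤ blkProd A 0 s i' j := by
    intro s hs
    obtain ⟨u, rfl⟩ := Nat.exists_eq_add_of_le hs
    rw [add_comm N u, blkProd_add, Matrix.mul_apply]
    calc δ = ∑ l, blkProd A 0 u i' l * δ := by rw [← Finset.sum_mul, blkProd_row A h1, one_mul]
      _ ≤ _ := Finset.sum_le_sum fun l _ =>
        mul_le_mul_of_nonneg_left (hN _ _ _) (blkProd_nonneg A h0 _ _ _ _)
  have hosc : ∀ s (a b : ι), blkProd A 0 s a j - blkProd A 0 s b j ≤ (1 - δ) ^ (s / N) := by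
    intro s a b
    have := osc_bound A h0 h1 N δ hδ hN (s / N) (s % N) 0 a b j
    rwa [mul_comm, Nat.div_add_mod] at this
  have hlim : Tendsto (fun s => (1 - δ) ^ (s / N) / δ) atTop (nhds 0) := by
    have h := (tendsto_pow_atTop_nhds_zero_of_lt_one (r := 1 - δ) (by linarith) (by linarith)).comp
      (Nat.tendsto_div_const_atTop hNpos.ne')
    simpa using h.div_const δ
  rw [tendsto_iff_dist_tendsto_zero]
  refine squeeze_zero' (Eventually.of_forall fun _ => dist_nonneg) ?_ hlim
  filter_upwards [eventually_ge_atTop N] with s hs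
  have hp := hlow s hs
  have hp0 : 0 < blkProd A 0 s i' j := hδ.trans_le hp
  rw [Real.dist_eq, div_sub_one hp0.ne', abs_div, abs_of_pos hp0]
  have : |blkProd A 0 s i j - blkProd A 0 s i' j| ≤ (1 - δ) ^ (s / N) :=
    abs_le.2 ⟨by linarith [hosc s i' i], hosc s i i'⟩
  exact div_le_div₀ (pow_nonneg (by linarith) _) this hδ hp

end abstract_part

/-- homogeneous coordinates -/
noncomputable def homX {n : ℕ} (y : Fin n → ℝ) : ℕ → ℝ
  | 0 => 1
  | j + 1 => ent y j

lemma digit_pos {n : ℕ} (y : Fin n → ℝ) (hy : y ∈ Bset n) (h : 0 < ent y (n - 1)) :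
    1 ≤ msaDigit y := by
  rw [msaDigit, Int.le_floor]
  have : ent y (n - 1) ≤ 1 := (hy.2 0 _ (Nat.zero_le _)).trans hy.1
  push_cast
  exact (one_le_inv₀ h).2 this

lemma ent_S {n : ℕ} (y : Fin n → ℝ) (i : ℕ) : ent (msaS y) i =
    if i + 1 < n then ent y (i + 1) / ent y 0 else
    if i + 1 = n then (1 - (msaDigit y : ℝ) * ent y (n - 1)) / ent y 0 else 0 := by
  by_cases hi : i < n
  · have e : ent (msaS y) i = msaS y ⟨i, hi⟩ := dif_pos hi
    rw [e, msaS]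
    dsimp only
    by_cases h1 : i + 1 < n
    · rw [if_pos h1, if_pos h1]
    · rw [if_neg h1, if_neg h1, if_pos (by omega)]
  · have e : ent (msaS y) i = 0 := dif_neg hi
    rw [e, if_neg (by omega), if_neg (by omega)]

lemma S_mem {n : ℕ} (hn : 1 ≤ n) (y : Fin n → ℝ) (hy : y ∈ Bset n) (h : 0 < ent y (n - 1)) :
    msaS y ∈ Bset n := by
  have hy0 : 0 < ent y 0 := h.trans_le (hy.2 _ _ (Nat.zero_le _))
  have hk1 : (msaDigit y : ℝ) * ent y (n - 1) ≤ 1 := by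
    have := Int.floor_le (ent y (n - 1))⁻¹
    calc _ ≤ (ent y (n - 1))⁻¹ * ent y (n - 1) := mul_le_mul_of_nonneg_right this h.le
      _ = 1 := inv_mul_cancel₀ h.ne'
  have hk2 : 1 - (msaDigit y : ℝ) * ent y (n - 1) ≤ ent y (n - 1) := by
    have := (Int.lt_floor_add_one (ent y (n - 1))⁻¹).le
    have h2 : (ent y (n - 1))⁻¹ * ent y (n - 1) ≤ ((msaDigit y : ℝ) + 1) * ent y (n - 1) :=
      mul_le_mul_of_nonneg_right this h.le
    rw [inv_mul_cancel₀ h.ne'] at h2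
    linarith
  refine ⟨?_, fun i j hij => antitone_nat_of_succ_le (f := ent (msaS y)) (fun i => ?_) hij⟩
  · rw [ent_S]
    split_ifs
    · rw [div_le_one hy0]; exact hy.2 _ _ (Nat.zero_le _)
    · rw [div_le_one hy0]; exact hk2.trans (hy.2 _ _ (Nat.zero_le _))
    · norm_num
  · rw [ent_S, ent_S]
    split_ifs with h1 h2 h3 h4 h5 h6 <;> first | (exfalso; omega) | skip
    · exact div_le_div_of_nonneg_right (hy.2 _ _ (by omega)) hy0.le
    · refine div_le_div_of_nonneg_right (hk2.trans (hy.2 _ _ (by omega))) hy0.le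
    · exact div_nonneg (by linarith) hy0.le
    · exact le_rfl

lemma beta_homX {n : ℕ} (hn : 1 ≤ n) (y : Fin n → ℝ) (hy0 : 0 < ent y 0) (i : Fin (n + 1)) :
    ∑ j : Fin (n + 1), selmerBeta n (msaDigit y) i j * homX (msaS y) j = homX y i / ent y 0 := by
  obtain ⟨k, rfl⟩ : ∃ k, n = k + 1 := ⟨n - 1, by omega⟩
  refine Fin.cases ?_ (fun i => ?_) i
  · rw [Fin.sum_univ_castSucc, Fin.sum_univ_castSucc, Finset.sum_eq_zero]
    · have hkk : homX (msaS y) k = ent y k / ent y 0 := by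
        cases k with
        | zero => simp [homX, hy0.ne']
        | succ k => simp [homX, ent_S]
      simp [selmerBeta, hkk]
      simp [homX, ent_S]
      field_simp
      ring
    · intro j _
      have := j.2
      simp [selmerBeta, this.ne]
      omega
  · rw [Finset.sum_eq_single i.castSucc]
    · have hi : homX (msaS y) i = ent y i / ent y 0 := by
        obtain ⟨i, hi⟩ := i
        cases i with
        | zero => simp [homX, hy0.ne']
        | succ i => simp [homX, ent_S, hi]
      simp [selmerBeta, hi]
      simp [homX]
    · intro j _ hj
      have : (j : ℕ) ≠ i := fun h => hj (Fin.ext h)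
      simp [selmerBeta, this]
    · simp

lemma homX_bounds {n : ℕ} (y : Fin n → ℝ) (hy : y ∈ Bset n) (j : ℕ) (hj : j ≤ n) (η : ℝ)
    (h1 : η ≤ ent y (n - 1)) : η ≤ homX y j ∧ homX y j ≤ 1 := by
  cases j with
  | zero => exact ⟨h1.trans ((hy.2 _ _ (Nat.zero_le _)).trans hy.1), le_rfl⟩
  | succ j => exact ⟨h1.trans (hy.2 _ _ (by omega)), (hy.2 _ _ (Nat.zero_le _)).trans hy.1⟩

lemma walk_all {n : ℕ} (hn : 1 ≤ n) (A : ℕ → Matrix (Fin (n + 1)) (Fin (n + 1)) ℝ)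
    (h0 : ∀ s i j, 0 ≤ A s i j) (ε : ℝ) (hε : 0 < ε)
    (he : ∀ s i j, 1 ≤ selmerBeta n 1 i j → ε ≤ A s i j) (i j : Fin (n + 1)) :
    Wlk A ε (1 + n + n + n * n) i j := by
  have down : ∀ d (i j : Fin (n + 1)), (i : ℕ) = j + d → Wlk A ε d i j := by
    intro d
    induction d with
    | zero => intro i j h; obtain rfl : i = j := Fin.ext (by simpa using h); exact Wlk.refl A ε i
    | succ d ih =>
      intro i j h
      have hi := i.2
      have h2 := ih ⟨i - 1, by omega⟩ j (by simp; omega)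
      rw [add_comm d 1]
      refine Wlk.trans h0 hε (Wlk.step A fun t => he t _ _ ?_) h2
      have h3 : (i : ℕ) - 1 + 1 = i := by omega
      have h4 : (i : ℕ) ≠ 0 := by omega
      have h5 : i ≠ 0 := fun h => h4 (by simp [h])
      simp [selmerBeta, h3, h4, h5]
  have up1 : Wlk A ε 1 0 ⟨n - 1, by omega⟩ :=
    Wlk.step A fun t => he t _ _ (by simp [selmerBeta])
  have up2 : Wlk A ε 1 0 ⟨n, by omega⟩ :=
    Wlk.step A fun t => he t _ _ (by simp [selmerBeta])
  have c1 : Wlk A ε n 0 0 := by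
    have := Wlk.trans h0 hε up1 (down (n - 1) _ 0 (by simp))
    rwa [show 1 + (n - 1) = n by omega] at this
  have c2 : Wlk A ε (n + 1) 0 0 := by
    have := Wlk.trans h0 hε up2 (down n _ 0 (by simp))
    rwa [add_comm 1 n] at this
  have cc : ∀ (L : ℕ), Wlk A ε L 0 0 → ∀ a, Wlk A ε (a * L) 0 0 := by
    intro L hL a
    induction a with
    | zero => rw [zero_mul]; exact Wlk.refl A ε 0
    | succ a ih => rw [add_mul, one_mul]; exact Wlk.trans h0 hε ih hL
  have closed : ∀ C, n * n ≤ C → Wlk A ε C 0 0 := by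
    intro C hC
    have hq : n ≤ C / n := (Nat.le_div_iff_mul_le (by omega)).2 hC
    have hr : C % n < n := Nat.mod_lt _ (by omega)
    have := Wlk.trans h0 hε (cc n c1 (C / n - C % n)) (cc (n + 1) c2 (C % n))
    have e : (C / n - C % n) * n + C % n * (n + 1) = C := by
      obtain ⟨u, hu⟩ := Nat.exists_eq_add_of_le (hr.le.trans hq)
      have h6 := Nat.div_add_mod C n
      rw [hu, Nat.add_sub_cancel_left]
      rw [hu] at h6
      nlinarith
    rwa [e] at this
  have hi := i.2
  have hj := j.2
  have f := Wlk.trans h0 hε (Wlk.trans h0 hε (Wlk.trans h0 hε (down i i 0 (by simp))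
    (closed (n * n + (n - i) + j) (by omega))) up2) (down (n - j) _ j (by simp; omega))
  have e : (i : ℕ) + (n * n + (n - i) + j) + 1 + (n - j) = 1 + n + n + n * n := by omega
  rwa [e] at f

/-- **Weak convergence of the periodic MSA.** Let `x ∈ B^n` have MSA orbit defined for
all times and suppose its MSA expansion is eventually periodic: `S^{m+p} x = S^m x` for
some `m ≥ 0`, `p ≥ 1`. Then for every `i ∈ {1,…,n}`,
`(β^{(s)})_{i,n−1} / (β^{(s)})_{0,n−1} → x_i` as `s → ∞`. -/
theorem msa_periodic_weak_convergence (n : ℕ) (hn : 1 ≤ n) (x : Fin n → ℝ)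
    (hx : x ∈ Bset n) (horb : ∀ s : ℕ, 0 < ent (msaS^[s] x) (n - 1))
    (m p : ℕ) (hp : 1 ≤ p) (hper : msaS^[m + p] x = msaS^[m] x) :
    ∀ i : Fin n,
      Tendsto
        (fun s : ℕ => (msaBeta n x s) i.succ ⟨n - 1, by omega⟩
          / (msaBeta n x s) 0 ⟨n - 1, by omega⟩)
        atTop (nhds (x i)) := by
  intro i
  have hB : ∀ s, msaS^[s] x ∈ Bset n := by
    intro s
    induction s with
    | zero => simpa using hx
    | succ s ih => rw [Function.iterate_succ_apply']; exact S_mem hn _ ih (horb s)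
  -- periodicity: finitely many orbit points
  have hred : ∀ s, ∃ t < m + p, msaS^[s] x = msaS^[t] x := by
    intro s
    induction s with
    | zero => exact ⟨0, by omega, rfl⟩
    | succ s ih =>
      obtain ⟨t, ht, h⟩ := ih
      by_cases h' : t + 1 < m + p
      · exact ⟨t + 1, h', by rw [Function.iterate_succ_apply', h, Function.iterate_succ_apply']⟩
      · refine ⟨m, by omega, ?_⟩
        rw [Function.iterate_succ_apply', h, ← Function.iterate_succ_apply' (f := msaS), ← hper,
          show t.succ = m + p by omega]
  obtain ⟨η, hη, hηle⟩ : ∃ η : ℝ, 0 < η ∧ ∀ s, η ≤ ent (msaS^[s] x) (n - 1) := by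
    obtain ⟨t, -, ht⟩ := Finset.exists_min_image (Finset.range (m + p))
      (fun s => ent (msaS^[s] x) (n - 1)) ⟨0, by simp; omega⟩
    refine ⟨_, horb t, fun s => ?_⟩
    obtain ⟨u, hu, h⟩ := hred s
    rw [h]
    exact ht u (Finset.mem_range.2 hu)
  set X : ℕ → ℕ → ℝ := fun s => homX (msaS^[s] x) with hX
  set c : ℕ → ℝ := fun s => ent (msaS^[s] x) 0 with hc
  set β : ℕ → Matrix (Fin (n + 1)) (Fin (n + 1)) ℝ :=
    fun s => selmerBeta n (msaDigit (msaS^[s] x)) with hβ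
  have hXb : ∀ s (j : Fin (n + 1)), η ≤ X s j ∧ X s j ≤ 1 := fun s j =>
    homX_bounds _ (hB s) j (Nat.lt_succ_iff.1 j.2) η (hηle s)
  have hXpos : ∀ s (j : Fin (n + 1)), 0 < X s j := fun s j => hη.trans_le (hXb s j).1
  have hcη : ∀ s, η ≤ c s := fun s => (hηle s).trans ((hB s).2 _ _ (Nat.zero_le _))
  have hcpos : ∀ s, 0 < c s := fun s => hη.trans_le (hcη s)
  have hdig : ∀ s, (1 : ℝ) ≤ (msaDigit (msaS^[s] x) : ℝ) := fun s => by
    exact_mod_cast digit_pos _ (hB s) (horb s)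
  have hβ0 : ∀ s i j, 0 ≤ β s i j := by
    intro s i j
    have := hdig s
    simp only [hβ, selmerBeta, Matrix.of_apply]
    split_ifs <;> linarith
  have hβ1 : ∀ s i j, 1 ≤ selmerBeta n 1 i j → 1 ≤ β s i j := by
    intro s i j h
    have := hdig s
    simp only [hβ, selmerBeta, Matrix.of_apply] at h ⊢
    split_ifs at h ⊢ <;> linarith
  have hβX : ∀ s (i : Fin (n + 1)), ∑ j : Fin (n + 1), β s i j * X (s + 1) j = X s i / c s := by
    intro s i
    simp only [hX, Function.iterate_succ_apply']
    exact beta_homX hn _ (hcpos s) i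
  set A : ℕ → Matrix (Fin (n + 1)) (Fin (n + 1)) ℝ :=
    fun s => Matrix.of fun i j => c s * β s i j * X (s + 1) j / X s i with hA
  have hA0 : ∀ s i j, 0 ≤ A s i j := fun s i j =>
    div_nonneg (mul_nonneg (mul_nonneg (hcpos s).le (hβ0 s i j)) (hXpos _ j).le) (hXpos _ i).le
  have hA1 : ∀ s i, ∑ j, A s i j = 1 := by
    intro s i
    have h1 := hXpos s i
    have h2 := hcpos s
    simp only [hA, Matrix.of_apply, ← Finset.sum_div, mul_assoc, ← Finset.mul_sum]
    rw [hβX]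
    field_simp
  have hAe : ∀ s i j, 1 ≤ selmerBeta n 1 i j → η * η ≤ A s i j := by
    intro s i j h
    simp only [hA, Matrix.of_apply]
    rw [le_div_iff₀ (hXpos s i)]
    have h1 : η ≤ c s * β s i j := (hcη s).trans (le_mul_of_one_le_right (hcpos s).le (hβ1 s i j h))
    have h2 : η * η ≤ c s * β s i j * X (s + 1) j :=
      mul_le_mul h1 (hXb _ j).1 hη.le (hη.le.trans h1)
    exact (mul_le_of_le_one_right (by positivity) (hXb s i).2).trans h2
  have hconj : ∀ s, ∃ C : ℝ, 0 < C ∧ ∀ i j : Fin (n + 1),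
      blkProd β 0 s i j = C * (X 0 i * blkProd A 0 s i j / X s j) := by
    intro s
    induction s with
    | zero =>
      refine ⟨1, one_pos, fun i j => ?_⟩
      rw [blkProd_zero, blkProd_zero, Matrix.one_apply]
      split_ifs with h
      · subst h; have := hXpos 0 i; field_simp
      · simp
    | succ s ih =>
      obtain ⟨C, hC, h⟩ := ih
      refine ⟨C / c s, div_pos hC (hcpos s), fun i j => ?_⟩
      rw [blkProd_add, blkProd_add, blkProd_one, blkProd_one, Matrix.mul_apply, Matrix.mul_apply,
        Finset.mul_sum, Finset.sum_div, Finset.mul_sum]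
      refine Finset.sum_congr rfl fun l _ => ?_
      rw [h]
      simp only [hA, Matrix.of_apply, zero_add]
      have h1 := hXpos s l
      have h2 := hcpos s
      have h3 := hXpos (s + 1) j
      field_simp
  have hlim := ratio_tendsto A hA0 hA1 (1 + n + n + n * n) (by omega) _ (by positivity)
    (fun t i j => walk_all hn A hA0 (η * η) (by positivity) hAe i j t) i.succ 0 ⟨n - 1, by omega⟩
  have hlim2 := hlim.const_mul (x i)
  rw [mul_one] at hlim2
  refine hlim2.congr fun s => ?_
  obtain ⟨C, hC, h⟩ := hconj s
  have e : msaBeta n x s = blkProd β 0 s := by simp [msaBeta, blkProd, hβ]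
  rw [e, h, h]
  have hx0 : X 0 ((0 : Fin (n + 1)) : ℕ) = 1 := rfl
  have hxi : X 0 (i.succ : ℕ) = x i := by simp [hX, homX, ent]
  have h3 := hXpos s ⟨n - 1, by omega⟩
  rw [hx0, hxi, mul_div_mul_left _ _ hC.ne', div_div_div_cancel_right₀ h3.ne', one_mul, mul_div_assoc]
end

section
/- Let x ∈ B^n have MSA orbit defined for all times with purely periodic expansion S^p x = x (p ≥ 1), with digits k_1, …, k_p, and set K := (1 + max(k_1,…,k_p))². Then for every s ≥ 0 and every i ∈ {1,…,n}, the ratio of row sums of β^{(s)} satisfies 1/K ≤ (Σ_{g=0}^{n} (β^{(s)})_{i,g}) / (Σ_{g=0}^{n} (β^{(s)})_{0,g}) ≤ K; in particular these ratios are bounded away from 0 and ∞ uniformly in s. -/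
open Matrix Filter

/-- The projective vector `(1, x₁, …, x_n)`. -/
noncomputable def zext {n : ℕ} (x : Fin n → ℝ) (g : Fin (n + 1)) : ℝ :=
  if (g : ℕ) = 0 then 1 else ent x ((g : ℕ) - 1)

lemma ent_msaS {n : ℕ} (x : Fin n → ℝ) (m : ℕ) (hm : m < n) :
    ent (msaS x) m = if m + 1 < n then ent x (m + 1) / ent x 0
      else (1 - (msaDigit x : ℝ) * ent x (n - 1)) / ent x 0 := by
  simp [ent, msaS, hm]

lemma digit_facts {n : ℕ} (x : Fin n → ℝ) (hpos : 0 < ent x (n - 1)) :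
    0 ≤ msaDigit x ∧ (msaDigit x : ℝ) * ent x (n - 1) ≤ 1 ∧
      1 < ((msaDigit x : ℝ) + 1) * ent x (n - 1) := by
  have h1 := Int.floor_le (ent x (n - 1))⁻¹
  have h2 := Int.lt_floor_add_one (ent x (n - 1))⁻¹
  have h3 : (ent x (n - 1))⁻¹ * ent x (n - 1) = 1 := inv_mul_cancel₀ hpos.ne'
  refine ⟨Int.floor_nonneg.mpr (inv_nonneg.mpr hpos.le), ?_, ?_⟩
  · calc _ ≤ (ent x (n - 1))⁻¹ * ent x (n - 1) := mul_le_mul_of_nonneg_right h1 hpos.le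
      _ = 1 := h3
  · calc 1 = (ent x (n - 1))⁻¹ * ent x (n - 1) := h3.symm
      _ < _ := mul_lt_mul_of_pos_right h2 hpos

lemma msaS_mem {n : ℕ} (hn : 1 ≤ n) (x : Fin n → ℝ) (hx : x ∈ Bset n)
    (hpos : 0 < ent x (n - 1)) : msaS x ∈ Bset n := by
  obtain ⟨h0, hanti⟩ := hx
  obtain ⟨hk, hk1, hk2⟩ := digit_facts x hpos
  have hx0 : 0 < ent x 0 := hpos.trans_le (hanti 0 (n - 1) (Nat.zero_le _))
  have hlast : 1 - (msaDigit x : ℝ) * ent x (n - 1) ≤ ent x (n - 1) := by linarith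
  refine ⟨?_, ?_⟩
  · rw [ent_msaS x 0 hn]
    split_ifs with h
    · rw [div_le_one hx0]; exact hanti _ _ (Nat.zero_le _)
    · rw [div_le_one hx0]; exact hlast.trans (hanti _ _ (Nat.zero_le _))
  · have step : ∀ m, ent (msaS x) (m + 1) ≤ ent (msaS x) m := by
      intro m
      by_cases hm : m + 1 < n
      · rw [ent_msaS x m (by omega), ent_msaS x (m + 1) hm, if_pos hm]
        split_ifs with h
        · exact div_le_div_of_nonneg_right (hanti _ _ (Nat.le_succ _)) hx0.le
        · exact div_le_div_of_nonneg_right (hlast.trans (hanti _ _ (by omega))) hx0.le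
      · have e : ent (msaS x) (m + 1) = 0 := by simp [ent, hm]
        rw [e]
        by_cases hm' : m < n
        · rw [ent_msaS x m hm', if_neg hm]
          exact div_nonneg (by linarith) hx0.le
        · simp [ent, hm']
    intro i j hij
    exact antitone_nat_of_succ_le step hij

lemma beta_zero {n : ℕ} (hn : 1 ≤ n) (k : ℤ) (v : Fin (n + 1) → ℝ) :
    (selmerBeta n k *ᵥ v) 0 = k * v ⟨n - 1, by omega⟩ + v (Fin.last n) := by
  have hne : (⟨n - 1, by omega⟩ : Fin (n + 1)) ≠ Fin.last n := by
    intro h; have := congrArg Fin.val h; simp at this; omega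
  rw [Matrix.mulVec, dotProduct, Fintype.sum_eq_add _ _ hne]
  · have h2 : ¬ n = n - 1 := by omega
    simp [selmerBeta, h2]
  · intro g hg
    have h1 : ¬ (g : ℕ) = n - 1 := fun h => hg.1 (Fin.ext h)
    have h2 : ¬ (g : ℕ) = n := fun h => hg.2 (Fin.ext h)
    simp [selmerBeta, h1, h2]

lemma beta_succ {n : ℕ} (k : ℤ) (v : Fin (n + 1) → ℝ) (i : Fin n) :
    (selmerBeta n k *ᵥ v) i.succ = v i.castSucc := by
  rw [Matrix.mulVec, dotProduct, Fintype.sum_eq_single i.castSucc]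
  · simp [selmerBeta]
  · intro g hg
    have h1 : ¬ (g : ℕ) = i := fun h => hg (Fin.ext h)
    simp [selmerBeta, h1]

lemma beta_zext {n : ℕ} (hn : 1 ≤ n) (x : Fin n → ℝ) (hx0 : 0 < ent x 0) :
    selmerBeta n (msaDigit x) *ᵥ zext (msaS x) = (ent x 0)⁻¹ • zext x := by
  funext g
  refine Fin.cases ?_ (fun i => ?_) g
  · rw [beta_zero hn]
    have hl : zext (msaS x) (Fin.last n)
        = (1 - (msaDigit x : ℝ) * ent x (n - 1)) / ent x 0 := by
      have : ¬ n = 0 := by omega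
      simp only [zext, Fin.val_last, this, if_false]
      rw [ent_msaS x _ (by omega), if_neg (by omega)]
    have hp : zext (msaS x) ⟨n - 1, by omega⟩ = ent x (n - 1) / ent x 0 := by
      by_cases h : n - 1 = 0
      · simp only [zext, h, if_true]
        rw [div_self hx0.ne']
      · simp only [zext, h, if_false]
        rw [ent_msaS x _ (by omega), if_pos (by omega)]
        congr 2; omega
    rw [hl, hp]
    simp [zext]
    field_simp
    ring
  · rw [beta_succ]
    by_cases h : (i : ℕ) = 0
    · simp [zext, h, hx0.ne']
    · simp only [zext, Fin.val_castSucc, h, if_false, Pi.smul_apply, Fin.val_succ, smul_eq_mul]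
      have hi := i.isLt
      rw [ent_msaS x _ (by omega), if_pos (by omega)]
      have e : (i : ℕ) - 1 + 1 = i := by omega
      simp [e, div_eq_inv_mul]

lemma msaBeta_succ (n : ℕ) (x : Fin n → ℝ) (s : ℕ) :
    msaBeta n x (s + 1) = msaBeta n x s * selmerBeta n (msaDigit (msaS^[s] x)) := by
  simp [msaBeta, List.range_succ]

lemma main_inv {n : ℕ} (hn : 1 ≤ n) (x : Fin n → ℝ)
    (hx : x ∈ Bset n) (horb : ∀ s : ℕ, 0 < ent (msaS^[s] x) (n - 1)) (s : ℕ) :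
    msaS^[s] x ∈ Bset n ∧ (∀ i j, 0 ≤ msaBeta n x s i j) ∧
      ∃ c : ℝ, 0 < c ∧ msaBeta n x s *ᵥ zext (msaS^[s] x) = c • zext x := by
  induction s with
  | zero =>
    refine ⟨hx, ?_, 1, one_pos, by simp [msaBeta]⟩
    intro i j
    simp only [msaBeta, List.range_zero, List.map_nil, List.prod_nil, Matrix.one_apply]
    split_ifs <;> norm_num
  | succ s ih =>
    obtain ⟨hB, hM, c, hc, hE⟩ := ih
    have hx0 : 0 < ent (msaS^[s] x) 0 := (horb s).trans_le (hB.2 0 (n - 1) (Nat.zero_le _))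
    have hk := (digit_facts _ (horb s)).1
    refine ⟨?_, ?_, c * (ent (msaS^[s] x) 0)⁻¹, by positivity, ?_⟩
    · rw [Function.iterate_succ_apply']
      exact msaS_mem hn _ hB (horb s)
    · intro i j
      rw [msaBeta_succ, Matrix.mul_apply]
      refine Finset.sum_nonneg fun g _ => mul_nonneg (hM _ _) ?_
      have hk' : (0 : ℝ) ≤ (msaDigit (msaS^[s] x) : ℝ) := by exact_mod_cast hk
      simp only [selmerBeta, Matrix.of_apply]
      split_ifs <;> first | exact hk' | norm_num
    · rw [msaBeta_succ, Function.iterate_succ_apply', ← Matrix.mulVec_mulVec, beta_zext hn _ hx0,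
        Matrix.mulVec_smul, hE, smul_smul, mul_comm]

lemma zext_bounds {n : ℕ} (x : Fin n → ℝ) (hx : x ∈ Bset n) (g : Fin (n + 1)) :
    ent x (n - 1) ≤ zext x g ∧ zext x g ≤ 1 := by
  obtain ⟨h0, ha⟩ := hx
  have hg := g.isLt
  unfold zext
  split_ifs with h
  · exact ⟨(ha 0 _ (Nat.zero_le _)).trans h0, le_refl _⟩
  · exact ⟨ha _ _ (by omega), (ha 0 _ (Nat.zero_le _)).trans h0⟩

/-- **Uniform bounds on the row-sum ratios.** Let `x ∈ B^n` have MSA orbit defined for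
all times with purely periodic expansion `S^p x = x` (`p ≥ 1`), with digits
`k₁, …, k_p`, and set `K = (1 + max(k₁,…,k_p))²`. Then for every `s ≥ 0` and every
`i ∈ {1,…,n}`, `1/K ≤ (Σ_{g=0}^n (β^{(s)})_{i,g}) / (Σ_{g=0}^n (β^{(s)})_{0,g}) ≤ K`;
in particular these ratios are bounded away from `0` and `∞` uniformly in `s`. -/
theorem msa_periodic_row_sum_ratios (n : ℕ) (hn : 1 ≤ n) (x : Fin n → ℝ)
    (hx : x ∈ Bset n) (horb : ∀ s : ℕ, 0 < ent (msaS^[s] x) (n - 1))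
    (p : ℕ) (hp : 1 ≤ p) (hper : msaS^[p] x = x) (kmax : ℤ)
    (hkmax : IsGreatest {d : ℤ | ∃ t : ℕ, t < p ∧ d = msaDigit (msaS^[t] x)} kmax) :
    ∀ s : ℕ, ∀ i : Fin n,
      1 / ((1 + (kmax : ℝ)) ^ 2)
          ≤ (∑ g : Fin (n + 1), msaBeta n x s i.succ g)
            / (∑ g : Fin (n + 1), msaBeta n x s 0 g) ∧
        (∑ g : Fin (n + 1), msaBeta n x s i.succ g)
            / (∑ g : Fin (n + 1), msaBeta n x s 0 g)
          ≤ (1 + (kmax : ℝ)) ^ 2 := by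
  intro s i
  obtain ⟨hB, hM, c, hc, hE⟩ := main_inv hn x hx horb s
  have hdig : ∀ t, msaDigit (msaS^[t] x) ≤ kmax := by
    intro t
    have hpp : Function.IsPeriodicPt msaS p x := hper
    rw [← hpp.iterate_mod_apply t]
    exact hkmax.2 ⟨t % p, Nat.mod_lt _ hp, rfl⟩
  have hd : ∀ t, 1 ≤ (1 + (kmax : ℝ)) * ent (msaS^[t] x) (n - 1) := by
    intro t
    have h1 := (digit_facts _ (horb t)).2.2
    have h2 : (msaDigit (msaS^[t] x) : ℝ) ≤ kmax := by exact_mod_cast hdig t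
    have h3 := mul_le_mul_of_nonneg_right h2 (horb t).le
    linarith
  have hk0 : (0 : ℝ) ≤ kmax := by
    exact_mod_cast (digit_facts _ (horb 0)).1.trans (hdig 0)
  have hrow : ∀ j, c * zext x j ≤ ∑ g, msaBeta n x s j g ∧
      ent (msaS^[s] x) (n - 1) * ∑ g, msaBeta n x s j g ≤ c * zext x j := by
    intro j
    have e : c * zext x j = ∑ g, msaBeta n x s j g * zext (msaS^[s] x) g := by
      have := congrFun hE j
      simpa [Matrix.mulVec, dotProduct] using this.symm
    rw [e, Finset.mul_sum]
    constructor
    · exact Finset.sum_le_sum fun g _ => mul_le_of_le_one_right (hM _ _) (zext_bounds _ hB g).2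
    · refine Finset.sum_le_sum fun g _ => ?_
      rw [mul_comm]
      exact mul_le_mul_of_nonneg_left (zext_bounds _ hB g).1 (hM _ _)
  obtain ⟨a1, a2⟩ := hrow 0
  obtain ⟨b1, b2⟩ := hrow i.succ
  have z0 : zext x 0 = 1 := by simp [zext]
  obtain ⟨z1, z2⟩ := zext_bounds x hx i.succ
  have d0 := hd 0
  have ds := hd s
  have p0 := horb 0
  have ps := horb s
  simp only [Function.iterate_zero, id] at d0 p0
  rw [z0, mul_one] at a1 a2
  set A := ∑ g, msaBeta n x s 0 g
  set R := ∑ g, msaBeta n x s i.succ g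
  set d := ent (msaS^[s] x) (n - 1)
  set z := zext x i.succ
  set L := 1 + (kmax : ℝ)
  have hL : 1 ≤ L := by simp only [L]; linarith
  have hA : 0 < A := hc.trans_le a1
  have hz : 1 ≤ L * z := d0.trans (mul_le_mul_of_nonneg_left z1 (by linarith))
  have hAL : A ≤ L * c := by
    calc A = 1 * A := (one_mul _).symm
      _ ≤ (L * d) * A := mul_le_mul_of_nonneg_right ds hA.le
      _ = L * (d * A) := by ring
      _ ≤ L * c := mul_le_mul_of_nonneg_left a2 (by linarith)
  have hcz : 0 < c * z := mul_pos hc (p0.trans_le z1)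
  have hR : 0 < R := hcz.trans_le b1
  have hRL : R ≤ L * (c * z) := by
    calc R = 1 * R := (one_mul _).symm
      _ ≤ (L * d) * R := mul_le_mul_of_nonneg_right ds hR.le
      _ = L * (d * R) := by ring
      _ ≤ L * (c * z) := mul_le_mul_of_nonneg_left b2 (by linarith)
  have hcR : c ≤ L * R := by
    calc c = c * 1 := (mul_one _).symm
      _ ≤ c * (L * z) := mul_le_mul_of_nonneg_left hz hc.le
      _ = L * (c * z) := by ring
      _ ≤ L * R := mul_le_mul_of_nonneg_left b1 (by linarith)
  constructor
  · rw [div_le_div_iff₀ (by positivity) hA]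
    calc 1 * A ≤ L * c := by linarith
      _ ≤ L * (L * R) := mul_le_mul_of_nonneg_left hcR (by linarith)
      _ = R * L ^ 2 := by ring
  · rw [div_le_iff₀ hA]
    calc R ≤ L * (c * z) := hRL
      _ ≤ L * A := mul_le_mul_of_nonneg_left
        ((mul_le_of_le_one_right hc.le z2).trans a1) (by linarith)
      _ ≤ L * (L * A) := le_mul_of_one_le_left (by positivity) hL
      _ = L ^ 2 * A := by ring
end
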